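/- arXiv:2110.03954 — 5 statements merged into one kernel-verified Lean document; each statement's English description precedes it below -/
import Mathlib

section
/- Let g be a Lie algebra over a field K, let f ⊆ g be a K-subspace, and let β : f × f → f be a bilinear map making (f, β) a Lie algebra (β antisymmetric and satisfying the Jacobi identity). Define κ(x,y) := ⁅x,y⁆ − β(x,y) ∈ g for x, y ∈ f. Suppose Z ∈ f satisfies κ(Z, y) = 0 for all y ∈ f. Then for all X, Y ∈ f: ⁅Z, κ(X,Y)⁆ = κ(β(Z,X), Y) + κ(X, β(Z,Y)), where ⁅·,·⁆ is the bracket of g. -/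
/-!
Since `κ(Z, ·) = 0`, the operator `β(Z, ·)` on `f` is the restriction of `ad Z`. By the Jacobi
identity in `f` it is a derivation of `β`, and by the Jacobi identity in `g` the operator `ad Z` is
a derivation of the ambient bracket. Hence `Z` annihilates both brackets, and so their difference
`κ`.
-/

section Curvature

variable {R M L : Type*} [CommRing R] [AddCommMonoid M] [Module R M] [LieRing L] [LieAlgebra R L]

/-- The curvature `κ(x, y) = ⁅x, y⁆ - β(x, y)`, which measures the failure of `ι : M → L` to carry
the bracket `β` on `M` to the bracket of `L`. The inclusion of a subspace is replaced by a linear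
map `ι`, and `β` is an arbitrary binary operation. -/
def curvature (ι : M →ₗ[R] L) (β : M → M → M) (x y : M) : L :=
  ⁅ι x, ι y⁆ - ι (β x y)

theorem curvature_eq_zero_iff {ι : M →ₗ[R] L} {β : M → M → M} {x y : M} :
    curvature ι β x y = 0 ↔ ι (β x y) = ⁅ι x, ι y⁆ :=
  sub_eq_zero.trans eq_comm

theorem lieDerivation_apply_curvature (D : LieDerivation R L L) {ι : M →ₗ[R] L} {β : M → M → M}
    {δ : M → M} (hδ : ∀ x y, δ (β x y) = β (δ x) y + β x (δ y))
    (hι : Function.Semiconj ι δ D) (x y : M) :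
    D (curvature ι β x y) = curvature ι β (δ x) y + curvature ι β x (δ y) := by
  have apply_lie : D ⁅ι x, ι y⁆ = ⁅ι (δ x), ι y⁆ + ⁅ι x, ι (δ y)⁆ := by
    rw [D.apply_lie_eq_add, hι.eq, hι.eq, add_comm]
  have apply_β : D (ι (β x y)) = ι (β (δ x) y) + ι (β x (δ y)) := by
    rw [← hι.eq, hδ, map_add]
  calc D (curvature ι β x y)
      = D ⁅ι x, ι y⁆ - D (ι (β x y)) := map_sub D _ _
    _ = (⁅ι (δ x), ι y⁆ + ⁅ι x, ι (δ y)⁆) - (ι (β (δ x) y) + ι (β x (δ y))) := by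
      rw [apply_lie, apply_β]
    _ = curvature ι β (δ x) y + curvature ι β x (δ y) := add_sub_add_comm _ _ _ _

theorem stmt2_general (ι : M →ₗ[R] L) (β : M → M → M) (Z : M)
    (leibniz : ∀ x y, β Z (β x y) = β (β Z x) y + β x (β Z y))
    (hZ : ∀ y, curvature ι β Z y = 0) (X Y : M) :
    ⁅ι Z, curvature ι β X Y⁆ = curvature ι β (β Z X) Y + curvature ι β X (β Z Y) := by
  have semiconj_ad : Function.Semiconj ι (β Z) (LieDerivation.ad R L (ι Z)) := fun y =>
    (curvature_eq_zero_iff.mp (hZ y)).trans (LieDerivation.ad_apply_apply R L (ι Z) (ι y)).symm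
  rw [← LieDerivation.ad_apply_apply R L]
  exact lieDerivation_apply_curvature _ leibniz semiconj_ad X Y

end Curvature

theorem stmt2 {K : Type*} [Field K] {g : Type*} [LieRing g] [LieAlgebra K g]
    (f : Submodule K g) (β : f →ₗ[K] f →ₗ[K] f)
    (anti : ∀ x y : f, β x y = -β y x)
    (jac : ∀ x y z : f, β x (β y z) = β (β x y) z + β y (β x z))
    (κ : f → f → g) (hκ : ∀ x y : f, κ x y = ⁅(x : g), (y : g)⁆ - (β x y : g))
    (Z : f) (hZ : ∀ y : f, κ Z y = 0) :
    ∀ X Y : f, ⁅(Z : g), κ X Y⁆ = κ (β Z X) Y + κ X (β Z Y) := by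
  obtain rfl : κ = curvature f.subtype (β · ·) := funext₂ hκ
  exact stmt2_general f.subtype (β · ·) Z (jac Z) hZ
end

section
/- Let N ≥ 1 be an integer. On ℝ² with coordinates (t,u), consider the N + 5 smooth vector fields ∂_t, t∂_t, t²∂_t + N t u ∂_u, u∂_u, and t^k ∂_u for k = 0, 1, …, N. These vector fields are linearly independent over ℝ, and their real span is closed under the Lie bracket of vector fields [X,Y](p) = DY(p)(X(p)) − DX(p)(Y(p)); hence they span an (N+5)-dimensional Lie subalgebra of the Lie algebra of smooth vector fields on ℝ². -/
/-- The Lie bracket of vector fields on a real normed space: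
`[X,Y](p) = DY(p)(X(p)) − DX(p)(Y(p))`. -/
noncomputable def vbracket {E : Type*} [NormedAddCommGroup E] [NormedSpace ℝ E]
    (X Y : E → E) : E → E :=
  fun p => fderiv ℝ Y p (X p) - fderiv ℝ X p (Y p)

/-!
The lift of `f ∂_t` to the densities of weight `-N/2` is `f ∂_t + (N/2) f' u ∂_u`. Two lifts bracket
to the lift of the Wronskian of their coefficients, and a lift and a translation `q ∂_u` bracket to
the translation by `f q' - (N/2) f' q`. If `deg f ≤ 2` and `deg q ≤ N`, this polynomial again has
degree at most `N`: its value on `f = t^j` and `q = t^k` is `(k - j N/2) t^(j+k-1)`, which vanishes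
for `j = 2`, `k = N`. The Wronskian is the case `N = 2`. So these lifts and translations, together
with the scalings `d u ∂_u`, form a Lie algebra of dimension `3 + 1 + (N + 1)`; the `N + 5` given
fields span it, hence they are independent.
-/

open Polynomial

theorem X_pow_mem_degreeLT {R : Type*} [Semiring R] {k n : ℕ} (hk : k < n) :
    (X ^ k : R[X]) ∈ degreeLT R n :=
  mem_degreeLT.2 ((degree_X_pow_le k).trans_lt (by exact_mod_cast hk))

theorem degreeLT_le_iff {R : Type*} [Semiring R] {n : ℕ} {S : Submodule R R[X]} :
    degreeLT R n ≤ S ↔ ∀ k < n, X ^ k ∈ S := by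
  classical
  rw [degreeLT_eq_span_X_pow, Submodule.span_le, Finset.coe_image, Set.image_subset_iff]
  simp [Set.subset_def]

theorem finrank_degreeLT {R : Type*} [Ring R] [StrongRankCondition R] (n : ℕ) :
    Module.finrank R (degreeLT R n) = n := by
  rw [(degreeLTEquiv R n).finrank_eq, Module.finrank_fin_fun]

theorem finrank_submodule_prod {K M M' : Type*} [DivisionRing K] [AddCommGroup M] [Module K M]
    [AddCommGroup M'] [Module K M'] (p : Submodule K M) (q : Submodule K M')
    [FiniteDimensional K p] [FiniteDimensional K q] :
    Module.finrank K (p.prod q) = Module.finrank K p + Module.finrank K q := by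
  have hinj : Function.Injective (p.subtype.prodMap q.subtype) :=
    p.subtype_injective.prodMap q.subtype_injective
  rw [← Module.finrank_prod, ← LinearMap.finrank_range_of_inj hinj, LinearMap.range_prodMap,
    p.range_subtype, q.range_subtype]

/-- The infinitesimal action `f q' - s f' q` of the vector field `f ∂_t` on the density `q` of
weight `-s`, as a bilinear map. -/
noncomputable def densityAction {R : Type*} [CommRing R] (s : R) : R[X] →ₗ[R] R[X] →ₗ[R] R[X] :=
  (LinearMap.mul R R[X]).compl₂ derivative - s • (LinearMap.mul R R[X]).comp derivative

section DensityAction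

variable {R : Type*} [CommRing R]

theorem densityAction_apply (s : R) (f q : R[X]) :
    densityAction s f q = f * derivative q - C s * (derivative f * q) := by
  simp [densityAction, smul_eq_C_mul]

theorem densityAction_one (f g : R[X]) : densityAction 1 f g = wronskian f g := by
  simp [densityAction_apply, wronskian]

-- Multiplying by `X` avoids the truncated exponent `j + k - 1`.
theorem X_mul_densityAction_X_pow (s : R) (j k : ℕ) :
    X * densityAction s (X ^ j) (X ^ k) = C (k - s * j) * X ^ (j + k) := by
  have X_mul_derivative (m : ℕ) : X * derivative (X ^ m : R[X]) = C (m : R) * X ^ m := by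
    cases m with
    | zero => simp
    | succ m => rw [derivative_X_pow_succ, Nat.cast_succ]; ring
  calc X * densityAction s (X ^ j) (X ^ k)
      = X ^ j * (X * derivative (X ^ k)) - C s * (X * derivative (X ^ j)) * X ^ k := by
        rw [densityAction_apply]; ring
    _ = C (k - s * j) * X ^ (j + k) := by
        rw [X_mul_derivative, X_mul_derivative, C_sub, C_mul]; ring

theorem densityAction_X_pow_mem_degreeLT {N : ℕ} {s : R} (hs : s * 2 = N) {j k : ℕ} (hj : j < 3)
    (hk : k < N + 1) : densityAction s (X ^ j) (X ^ k) ∈ degreeLT R (N + 1) := by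
  rw [mem_degreeLT, degree_lt_iff_coeff_zero]
  intro m hm
  rw [← coeff_X_mul, X_mul_densityAction_X_pow, coeff_C_mul_X_pow]
  split_ifs with hmjk
  · obtain ⟨rfl, rfl⟩ : j = 2 ∧ k = N := by omega
    simp [hs]
  · rfl

theorem densityAction_mem_degreeLT {N : ℕ} {s : R} (hs : s * 2 = N) {f q : R[X]}
    (hf : f ∈ degreeLT R 3) (hq : q ∈ degreeLT R (N + 1)) :
    densityAction s f q ∈ degreeLT R (N + 1) := by
  classical
  rw [degreeLT_eq_span_X_pow] at hf hq
  refine LinearMap.BilinMap.apply_apply_mem_of_mem_span _ _ _ _ ?_ f q hf hq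
  simp only [Finset.coe_image, Set.forall_mem_image, Finset.coe_range, Set.mem_Iio]
  exact fun j hj k hk => densityAction_X_pow_mem_degreeLT hs hj hk

theorem wronskian_mem_degreeLT_three {f g : R[X]} (hf : f ∈ degreeLT R 3)
    (hg : g ∈ degreeLT R 3) : wronskian f g ∈ degreeLT R 3 := by
  rw [← densityAction_one]
  exact densityAction_mem_degreeLT (N := 2) (by simp) hf hg

end DensityAction

/-- The vector field `f(t) ∂_t + (g(t) u + q(t)) ∂_u` on the plane, where `t = p 0` and
`u = p 1`. -/
noncomputable def affineField (f g q : ℝ[X]) : (Fin 2 → ℝ) → (Fin 2 → ℝ) :=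
  fun p => ![f.eval (p 0), g.eval (p 0) * p 1 + q.eval (p 0)]

theorem fderiv_affineField (f g q : ℝ[X]) (p v : Fin 2 → ℝ) :
    fderiv ℝ (affineField f g q) p v =
      ![(derivative f).eval (p 0) * v 0,
        ((derivative g).eval (p 0) * p 1 + (derivative q).eval (p 0)) * v 0
          + g.eval (p 0) * v 1] := by
  have ht : HasFDerivAt (fun p : Fin 2 → ℝ => p 0)
      (ContinuousLinearMap.proj (R := ℝ) (φ := fun _ : Fin 2 => ℝ) 0) p := hasFDerivAt_apply 0 p
  have hu : HasFDerivAt (fun p : Fin 2 → ℝ => p 1)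
      (ContinuousLinearMap.proj (R := ℝ) (φ := fun _ : Fin 2 => ℝ) 1) p := hasFDerivAt_apply 1 p
  have heval (r : ℝ[X]) := (r.hasDerivAt (p 0)).comp_hasFDerivAt p ht
  have hfield : HasFDerivAt (affineField f g q) _ p :=
    (heval f).finCons ((((heval g).mul hu).add (heval q)).finCons (hasFDerivAt_const ![] p))
  rw [hfield.fderiv]
  ext i
  fin_cases i
  · simp
  · simp only [Fin.mk_one, Function.comp_apply, ContinuousLinearMap.comp_apply,
      ContinuousLinearMap.prod_apply, ContinuousLinearMap.proj_apply,
      ContinuousLinearEquiv.coe_coe, Fin.consEquivL_apply, Fin.cons_one, Fin.cons_zero,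
      Matrix.cons_val_one, Matrix.cons_val_fin_one, add_apply, smul_apply, smul_eq_mul]
    ring

theorem vbracket_affineField (f₁ g₁ q₁ f₂ g₂ q₂ : ℝ[X]) :
    vbracket (affineField f₁ g₁ q₁) (affineField f₂ g₂ q₂) =
      affineField (wronskian f₁ f₂) (f₁ * derivative g₂ - f₂ * derivative g₁)
        (f₁ * derivative q₂ - f₂ * derivative q₁ + (g₂ * q₁ - g₁ * q₂)) := by
  funext p
  simp only [vbracket, fderiv_affineField, affineField, wronskian, eval_add, eval_sub, eval_mul,
    Matrix.cons_val_zero, Matrix.cons_val_one, Matrix.sub_cons, Matrix.head_cons,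
    Matrix.tail_cons, Matrix.empty_sub_empty]
  congr! 2 <;> ring

theorem affineField_add (f₁ g₁ q₁ f₂ g₂ q₂ : ℝ[X]) :
    affineField (f₁ + f₂) (g₁ + g₂) (q₁ + q₂) =
      affineField f₁ g₁ q₁ + affineField f₂ g₂ q₂ := by
  ext p i
  fin_cases i
  · exact eval_add
  · simp [affineField, add_mul, add_add_add_comm]

theorem affineField_smul (r : ℝ) (f g q : ℝ[X]) :
    affineField (r • f) (r • g) (r • q) = r • affineField f g q := by
  ext p i
  fin_cases i <;> simp [affineField, mul_add, mul_assoc]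

theorem affineField_eq_zero_iff {f g q : ℝ[X]} :
    affineField f g q = 0 ↔ f = 0 ∧ g = 0 ∧ q = 0 := by
  constructor
  · intro h
    have hf (t : ℝ) : f.eval t = 0 := by
      simpa [affineField] using congrFun (congrFun h ![t, 0]) 0
    have hgq (t u : ℝ) : g.eval t * u + q.eval t = 0 := by
      simpa [affineField] using congrFun (congrFun h ![t, u]) 1
    have hq (t : ℝ) : q.eval t = 0 := by simpa using hgq t 0
    have hg (t : ℝ) : g.eval t = 0 := by simpa [hq] using hgq t 1
    exact ⟨Polynomial.funext (by simpa using hf), Polynomial.funext (by simpa using hg),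
      Polynomial.funext (by simpa using hq)⟩
  · rintro ⟨rfl, rfl, rfl⟩
    ext p i
    fin_cases i <;> simp [affineField]

/-- The vector field `f ∂_t + ((s f' + d) u + q) ∂_u` attached to the triple `(f, d, q)`: the lift
of `f ∂_t` to the densities `u` of weight `-s`, plus a scaling of rate `d` and a translation by `q`
in the fibres. -/
noncomputable def densityField (s : ℝ) :
    ℝ[X] × ℝ × ℝ[X] →ₗ[ℝ] ((Fin 2 → ℝ) → (Fin 2 → ℝ)) where
  toFun c := affineField c.1 (s • derivative c.1 + C c.2.1) c.2.2
  map_add' c₁ c₂ := by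
    rw [← affineField_add]
    simp only [Prod.fst_add, Prod.snd_add, derivative_add, smul_add, C_add, add_add_add_comm]
  map_smul' r c := by
    rw [RingHom.id_apply, ← affineField_smul]
    simp only [Prod.smul_fst, Prod.smul_snd, derivative_smul, smul_add, smul_C, smul_comm r s]

theorem densityField_apply (s : ℝ) (f : ℝ[X]) (d : ℝ) (q : ℝ[X]) :
    densityField s (f, d, q) = affineField f (s • derivative f + C d) q :=
  rfl

theorem densityField_injective (s : ℝ) : Function.Injective (densityField s) := by
  refine (injective_iff_map_eq_zero _).2 ?_
  rintro ⟨f, d, q⟩ h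
  obtain ⟨rfl, hd, rfl⟩ := affineField_eq_zero_iff.1 h
  simpa using hd

theorem vbracket_densityField (s : ℝ) (f₁ f₂ : ℝ[X]) (d₁ d₂ : ℝ) (q₁ q₂ : ℝ[X]) :
    vbracket (densityField s (f₁, d₁, q₁)) (densityField s (f₂, d₂, q₂)) =
      densityField s (wronskian f₁ f₂, 0,
        densityAction s f₁ q₂ - d₁ • q₂ - (densityAction s f₂ q₁ - d₂ • q₁)) := by
  simp only [densityField_apply, vbracket_affineField, densityAction_apply, wronskian,
    smul_eq_C_mul, derivative_add, derivative_sub, derivative_mul, derivative_C, C_0]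
  congr 1 <;> ring

/-- The space of triples `(f, d, q)` with `deg f ≤ 2` and `deg q ≤ N`, parametrizing
`(sl₂ × gl₁) ⋉ V_N` through `densityField (N / 2)`. -/
noncomputable def symmetryParameters (N : ℕ) : Submodule ℝ (ℝ[X] × ℝ × ℝ[X]) :=
  (degreeLT ℝ 3).prod ((⊤ : Submodule ℝ ℝ).prod (degreeLT ℝ (N + 1)))

theorem finrank_symmetryParameters (N : ℕ) :
    Module.finrank ℝ (symmetryParameters N) = N + 5 := by
  have (n : ℕ) : FiniteDimensional ℝ (degreeLT ℝ n) := (degreeLTEquiv ℝ n).symm.finiteDimensional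
  have : FiniteDimensional ℝ ((⊤ : Submodule ℝ ℝ).prod (degreeLT ℝ (N + 1))) :=
    .of_fg (.prod .of_finite .of_finite)
  rw [symmetryParameters, finrank_submodule_prod, finrank_submodule_prod, finrank_top,
    Module.finrank_self, finrank_degreeLT, finrank_degreeLT]
  ring

/-- The triples of the fields `∂_t`, `t ∂_t`, `t² ∂_t + N t u ∂_u`, `u ∂_u` and `t^k ∂_u` under
`densityField (N / 2)`. -/
noncomputable def symmetryGenerator (N : ℕ) : ℕ → ℝ[X] × ℝ × ℝ[X]
  | 0 => (1, 0, 0)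
  -- The lift of `t ∂_t` is `t ∂_t + (N / 2) u ∂_u`, so the scaling has to be subtracted.
  | 1 => (X, -(N / 2), 0)
  | 2 => (X ^ 2, 0, 0)
  | 3 => (0, 1, 0)
  | k + 4 => (0, 0, X ^ k)

theorem densityField_symmetryGenerator (N i : ℕ) :
    densityField (N / 2) (symmetryGenerator N i) = fun p =>
      if i = 0 then ![1, 0]
      else if i = 1 then ![p 0, 0]
      else if i = 2 then ![p 0 ^ 2, (N : ℝ) * p 0 * p 1]
      else if i = 3 then ![0, p 1]
      else ![0, p 0 ^ (i - 4)] := by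
  funext p
  match i with
  | 0 | 1 | 3 | k + 4 => simp [symmetryGenerator, densityField_apply, affineField]
  | 2 =>
    have lift_coeff : (N / 2 * (2 * p 0) : ℝ) = N * p 0 := by ring
    simp [symmetryGenerator, densityField_apply, affineField, one_add_one_eq_two, lift_coeff]

theorem symmetryGenerator_mem_symmetryParameters {N i : ℕ} (hi : i < N + 5) :
    symmetryGenerator N i ∈ symmetryParameters N := by
  have one_mem : (1 : ℝ[X]) ∈ degreeLT ℝ 3 := by simpa using X_pow_mem_degreeLT three_pos
  have X_mem : (X : ℝ[X]) ∈ degreeLT ℝ 3 := by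
    simpa using X_pow_mem_degreeLT (R := ℝ) (show 1 < 3 by norm_num)
  match i with
  | 0 => exact ⟨one_mem, trivial, zero_mem _⟩
  | 1 => exact ⟨X_mem, trivial, zero_mem _⟩
  | 2 => exact ⟨X_pow_mem_degreeLT (by norm_num), trivial, zero_mem _⟩
  | 3 => exact ⟨zero_mem _, trivial, zero_mem _⟩
  | k + 4 => exact ⟨zero_mem _, trivial, X_pow_mem_degreeLT (by omega)⟩

theorem span_symmetryGenerator (N : ℕ) :
    Submodule.span ℝ (Set.range fun i : Fin (N + 5) => symmetryGenerator N i) =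
      symmetryParameters N := by
  set S := Submodule.span ℝ (Set.range fun i : Fin (N + 5) => symmetryGenerator N i)
  have generator_mem (i : ℕ) (hi : i < N + 5) : symmetryGenerator N i ∈ S :=
    Submodule.subset_span ⟨⟨i, hi⟩, rfl⟩
  have scaling_mem (d : ℝ) : (0, d, 0) ∈ S := by
    simpa [symmetryGenerator] using S.smul_mem d (generator_mem 3 (by omega))
  have lift_mem : degreeLT ℝ 3 ≤ S.comap (LinearMap.inl ℝ ℝ[X] (ℝ × ℝ[X])) := by
    refine degreeLT_le_iff.2 fun k hk => ?_
    interval_cases k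
    · exact generator_mem 0 (by omega)
    · simpa [symmetryGenerator, Prod.zero_eq_mk] using
        add_mem (generator_mem 1 (by omega)) (scaling_mem (N / 2))
    · exact generator_mem 2 (by omega)
  have translation_mem : degreeLT ℝ (N + 1) ≤
      S.comap (LinearMap.inr ℝ ℝ[X] (ℝ × ℝ[X]) ∘ₗ LinearMap.inr ℝ ℝ ℝ[X]) :=
    degreeLT_le_iff.2 fun k hk => generator_mem (k + 4) (by omega)
  apply le_antisymm
  · rw [Submodule.span_le, Set.range_subset_iff]
    exact fun i => symmetryGenerator_mem_symmetryParameters i.isLt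
  · rintro ⟨f, d, q⟩ ⟨hf, -, hq⟩
    have decomposition : (f, d, q) = (f, 0, 0) + (0, d, 0) + (0, 0, q) := by simp
    rw [decomposition]
    exact add_mem (add_mem (lift_mem hf) (scaling_mem d)) (translation_mem hq)

/-- The Lie algebra `(sl₂ × gl₁) ⋉ V_N` of vector fields on the plane. -/
noncomputable def symmetryAlgebra (N : ℕ) : Submodule ℝ ((Fin 2 → ℝ) → (Fin 2 → ℝ)) :=
  (symmetryParameters N).map (densityField (N / 2))

theorem span_densityField_symmetryGenerator (N : ℕ) :
    Submodule.span ℝ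
        (Set.range fun i : Fin (N + 5) => densityField (N / 2) (symmetryGenerator N i)) =
      symmetryAlgebra N := by
  rw [symmetryAlgebra, ← span_symmetryGenerator, Submodule.map_span, ← Set.range_comp']

theorem finrank_symmetryAlgebra (N : ℕ) : Module.finrank ℝ (symmetryAlgebra N) = N + 5 := by
  rw [← finrank_symmetryParameters N]
  exact (Submodule.equivMapOfInjective _ (densityField_injective (N / 2)) _).finrank_eq.symm

theorem vbracket_mem_symmetryAlgebra {N : ℕ} {Y Z : (Fin 2 → ℝ) → (Fin 2 → ℝ)}
    (hY : Y ∈ symmetryAlgebra N) (hZ : Z ∈ symmetryAlgebra N) :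
    vbracket Y Z ∈ symmetryAlgebra N := by
  obtain ⟨⟨f₁, d₁, q₁⟩, ⟨hf₁, -, hq₁⟩, rfl⟩ := hY
  obtain ⟨⟨f₂, d₂, q₂⟩, ⟨hf₂, -, hq₂⟩, rfl⟩ := hZ
  have translation_mem {f q : ℝ[X]} (d : ℝ) (hf : f ∈ degreeLT ℝ 3)
      (hq : q ∈ degreeLT ℝ (N + 1)) :
      densityAction (N / 2 : ℝ) f q - d • q ∈ degreeLT ℝ (N + 1) :=
    sub_mem (densityAction_mem_degreeLT (by ring) hf hq) (Submodule.smul_mem _ d hq)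
  rw [vbracket_densityField]
  exact Submodule.mem_map_of_mem ⟨wronskian_mem_degreeLT_three hf₁ hf₂, trivial,
    sub_mem (translation_mem d₁ hf₁ hq₂) (translation_mem d₂ hf₂ hq₁)⟩

/-- The `N+5` vector fields `∂_t, t∂_t, t²∂_t + Ntu∂_u, u∂_u, t^k∂_u (0 ≤ k ≤ N)` on `ℝ²`
are linearly independent and span an `(N+5)`-dimensional Lie algebra of vector fields. -/
theorem stmt8 (N : ℕ) (hN : 1 ≤ N)
    (V : Fin (N + 5) → ((Fin 2 → ℝ) → (Fin 2 → ℝ)))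
    (hV : ∀ i : Fin (N + 5), V i = fun p =>
      if (i : ℕ) = 0 then ![1, 0]
      else if (i : ℕ) = 1 then ![p 0, 0]
      else if (i : ℕ) = 2 then ![(p 0) ^ 2, (N : ℝ) * p 0 * p 1]
      else if (i : ℕ) = 3 then ![0, p 1]
      else ![0, (p 0) ^ ((i : ℕ) - 4)]) :
    LinearIndependent ℝ V ∧
    (∀ X ∈ Submodule.span ℝ (Set.range V), ∀ Y ∈ Submodule.span ℝ (Set.range V),
      vbracket X Y ∈ Submodule.span ℝ (Set.range V)) ∧
    Module.finrank ℝ (Submodule.span ℝ (Set.range V)) = N + 5 := by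
  obtain rfl : V = fun i : Fin (N + 5) => densityField (N / 2) (symmetryGenerator N i) :=
    funext fun i => (hV i).trans (densityField_symmetryGenerator N i).symm
  rw [linearIndependent_iff_card_eq_finrank_span, Set.finrank, Fintype.card_fin,
    span_densityField_symmetryGenerator, finrank_symmetryAlgebra]
  exact ⟨rfl, fun Y hY Z hZ => vbracket_mem_symmetryAlgebra hY hZ, rfl⟩
end

section
/- Let n ≥ 2 and let r be an integer with 2 ≤ r ≤ n+1. On ℝ^{n+2} with coordinates (t, u₀, u₁, …, u_n), define the smooth vector fields D := ∂_t + Σ_{i=0}^{n−1} u_{i+1} ∂_{u_i} + u_{n+1−r} ∂_{u_n} and V := ∂_{u_n}. Then: (i) [∂_t, D] = 0 and [∂_t, V] = 0; (ii) the Euler field ε := Σ_{i=0}^{n} u_i ∂_{u_i} satisfies [ε, D] = 0 and [ε, V] = −V; (iii) for every C^∞ function s : ℝ → ℝ, the vector field ξ_s := Σ_{i=0}^{n} s^{(i)}(t) ∂_{u_i} satisfies [ξ_s, V] = 0 and [ξ_s, D] = (s^{(n+1−r)}(t) − s^{(n+1)}(t)) · V; in particular [ξ_s, D] = 0 if and only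 if s^{(n+1)} = s^{(n+1−r)} identically on ℝ. -/
/-!
Write a point of `ℝ^{m+1}` as `(t, y)` with `y ∈ ℝ^m`. For a first-order linear system `y' = A y`
with suspended field `D = (1, A y)`, a field `(0, γ(t))` has `[(0, γ), D] = (0, A γ - γ')`, so it
commutes with `D` exactly when `γ` solves the system. The fields `∂_t = (1, 0)` and `ε = (0, y)`
commute with `D` because `A` is linear and does not depend on `t`. A scalar equation
`u^{(n+1)} = ∑ aᵢ u^{(i)}` is the case of a companion matrix `A`, and for the jet
`γ = (s, s', …, s^{(n)})` all entries of `A γ - γ'` but the last vanish.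
-/

section SuspendedSystem

open Matrix (vecCons vecTail)

variable {m : ℕ}

/-- The field `∂_t` on `ℝ × ℝ^m`, encoded as `Fin (m + 1) → ℝ` with the time in coordinate `0`. -/
def timeField (m : ℕ) (_ : Fin (m + 1) → ℝ) : Fin (m + 1) → ℝ :=
  vecCons 1 0

/-- The projection `(t, y) ↦ y` as a continuous linear map. -/
def vecTailL (m : ℕ) : (Fin (m + 1) → ℝ) →L[ℝ] (Fin m → ℝ) :=
  ContinuousLinearMap.pi fun i => ContinuousLinearMap.proj i.succ

@[simp]
theorem vecTailL_apply (x : Fin (m + 1) → ℝ) : vecTailL m x = vecTail x :=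
  rfl

/-- The Euler field `∑ yᵢ ∂_{yᵢ}` of the fibres of `(t, y) ↦ t`. -/
def eulerField (m : ℕ) (x : Fin (m + 1) → ℝ) : Fin (m + 1) → ℝ :=
  vecCons 0 (vecTail x)

/-- The vertical field `∑ γᵢ(t) ∂_{yᵢ}` translating the fibre over `t` by `γ t`. -/
def verticalField (γ : ℝ → Fin m → ℝ) (x : Fin (m + 1) → ℝ) : Fin (m + 1) → ℝ :=
  vecCons 0 (γ (x 0))

/-- The field `∂_t + ∑ (A y)ᵢ ∂_{yᵢ}`, whose integral curves are the graphs of the solutions of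
`y' = A y`. -/
def suspendedField (A : (Fin m → ℝ) →L[ℝ] (Fin m → ℝ)) (x : Fin (m + 1) → ℝ) :
    Fin (m + 1) → ℝ :=
  vecCons 1 (A (vecTail x))

theorem timeField_eq_single : timeField m = fun _ => Pi.single 0 1 := by
  funext x j
  cases j using Fin.cases <;> simp [timeField]

theorem eulerField_eq_ite :
    eulerField m = fun (x : Fin (m + 1) → ℝ) (j : Fin (m + 1)) =>
      if (j : ℕ) = 0 then 0 else x j := by
  funext x j
  cases j using Fin.cases <;> simp [eulerField, vecTail]

theorem fderiv_vecCons_const {E : Type*} [NormedAddCommGroup E] [NormedSpace ℝ E]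
    {F : E → Fin m → ℝ} {F' : E →L[ℝ] (Fin m → ℝ)} {x : E} (c : ℝ)
    (hF : HasFDerivAt F F' x) (v : E) :
    fderiv ℝ (fun y => vecCons c (F y)) x v = vecCons 0 (F' v) := by
  have h : HasFDerivAt (fun y => vecCons c (F y))
      (ContinuousLinearMap.finCons (0 : E →L[ℝ] ℝ) F') x :=
    (hasFDerivAt_const c x).finCons hF
  exact DFunLike.congr_fun h.fderiv v

theorem vbracket_vecCons_const {F G : (Fin (m + 1) → ℝ) → Fin m → ℝ}
    {F' G' : (Fin (m + 1) → ℝ) →L[ℝ] (Fin m → ℝ)} {x : Fin (m + 1) → ℝ} (b c : ℝ)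
    (hF : HasFDerivAt F F' x) (hG : HasFDerivAt G G' x) :
    vbracket (fun y => vecCons b (F y)) (fun y => vecCons c (G y)) x =
      vecCons 0 (G' (vecCons b (F x)) - F' (vecCons c (G x))) := by
  simp [vbracket, fderiv_vecCons_const b hF, fderiv_vecCons_const c hG]

theorem hasFDerivAt_comp_eval_zero {γ : ℝ → Fin m → ℝ} {v : Fin m → ℝ} {x : Fin (m + 1) → ℝ}
    (hγ : HasDerivAt γ v (x 0)) :
    HasFDerivAt (fun y : Fin (m + 1) → ℝ => γ (y 0))
      (ContinuousLinearMap.toSpanSingleton ℝ v ∘L ContinuousLinearMap.proj 0) x :=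
  hγ.hasFDerivAt.comp x (hasFDerivAt_apply (𝕜 := ℝ) 0 x)

theorem verticalField_eq_zero_iff {γ : ℝ → Fin m → ℝ} : verticalField γ = 0 ↔ γ = 0 := by
  refine ⟨fun h => funext fun t => ?_, ?_⟩
  · have ht : vecTail (verticalField γ fun _ => t) = 0 := by simp [h]
    simpa [verticalField] using ht
  · rintro rfl
    funext x
    simp [verticalField]

theorem vbracket_timeField_suspendedField (A : (Fin m → ℝ) →L[ℝ] (Fin m → ℝ)) :
    vbracket (timeField m) (suspendedField A) = 0 := by
  funext x
  refine (vbracket_vecCons_const 1 1 (hasFDerivAt_const 0 x)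
    (A ∘L vecTailL m).hasFDerivAt).trans ?_
  simp

theorem vbracket_timeField_verticalField {γ γ' : ℝ → Fin m → ℝ}
    (hγ : ∀ t, HasDerivAt γ (γ' t) t) :
    vbracket (timeField m) (verticalField γ) = verticalField γ' := by
  funext x
  refine (vbracket_vecCons_const 1 0 (hasFDerivAt_const 0 x)
    (hasFDerivAt_comp_eval_zero (hγ (x 0)))).trans ?_
  simp [verticalField]

theorem vbracket_eulerField_suspendedField (A : (Fin m → ℝ) →L[ℝ] (Fin m → ℝ)) :
    vbracket (eulerField m) (suspendedField A) = 0 := by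
  funext x
  refine (vbracket_vecCons_const 0 1 (vecTailL m).hasFDerivAt
    (A ∘L vecTailL m).hasFDerivAt).trans ?_
  simp

theorem vbracket_eulerField_verticalField {γ : ℝ → Fin m → ℝ} (hγ : Differentiable ℝ γ) :
    vbracket (eulerField m) (verticalField γ) = -verticalField γ := by
  funext x
  refine (vbracket_vecCons_const 0 0 (vecTailL m).hasFDerivAt
    (hasFDerivAt_comp_eval_zero (hγ (x 0)).hasDerivAt)).trans ?_
  simp [verticalField]

theorem vbracket_verticalField_verticalField {γ δ : ℝ → Fin m → ℝ}
    (hγ : Differentiable ℝ γ) (hδ : Differentiable ℝ δ) :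
    vbracket (verticalField γ) (verticalField δ) = 0 := by
  funext x
  refine (vbracket_vecCons_const 0 0 (hasFDerivAt_comp_eval_zero (hγ (x 0)).hasDerivAt)
    (hasFDerivAt_comp_eval_zero (hδ (x 0)).hasDerivAt)).trans ?_
  simp

theorem vbracket_verticalField_suspendedField (A : (Fin m → ℝ) →L[ℝ] (Fin m → ℝ))
    {γ γ' : ℝ → Fin m → ℝ} (hγ : ∀ t, HasDerivAt γ (γ' t) t) :
    vbracket (verticalField γ) (suspendedField A) = verticalField fun t => A (γ t) - γ' t := by
  funext x
  refine (vbracket_vecCons_const 0 1 (hasFDerivAt_comp_eval_zero (hγ (x 0)))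
    (A ∘L vecTailL m).hasFDerivAt).trans ?_
  simp [verticalField]

end SuspendedSystem

section LinearEquation

variable {n : ℕ}

/-- The companion map of the equation `u^{(n+1)} = ∑ aᵢ u^{(i)}`: it turns the equation into the
first-order system `y' = companionMap a y` for the jet `y = (u, u', …, u^{(n)})`. -/
def companionMap (a : Fin (n + 1) → ℝ) : (Fin (n + 1) → ℝ) →L[ℝ] (Fin (n + 1) → ℝ) :=
  ContinuousLinearMap.pi <|
    Fin.snoc (α := fun _ => (Fin (n + 1) → ℝ) →L[ℝ] ℝ)
      (fun i => ContinuousLinearMap.proj i.succ) (∑ i, a i • ContinuousLinearMap.proj i)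

@[simp]
theorem companionMap_apply_castSucc (a y : Fin (n + 1) → ℝ) (i : Fin n) :
    companionMap a y i.castSucc = y i.succ := by
  simp [companionMap]

@[simp]
theorem companionMap_apply_last (a y : Fin (n + 1) → ℝ) :
    companionMap a y (Fin.last n) = ∑ i, a i * y i := by
  simp [companionMap]

/-- The curve `t ↦ (s t, s' t, …, s^{(n)} t)` of `n`-jets of `s`. -/
noncomputable def jet (n : ℕ) (s : ℝ → ℝ) (t : ℝ) (i : Fin (n + 1)) : ℝ :=
  iteratedDeriv i s t

/-- The field `V = ∂_{u_n}` in the coordinates `(t, u₀, …, u_n)`. -/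
def topField (n : ℕ) : (Fin (n + 2) → ℝ) → Fin (n + 2) → ℝ :=
  verticalField fun _ => Pi.single (Fin.last n) 1

theorem topField_eq_single : topField n = fun _ => Pi.single (Fin.last (n + 1)) 1 := by
  funext x j
  cases j using Fin.cases <;> simp [topField, verticalField, Pi.single_apply, ← Fin.succ_last]

theorem vbracket_timeField_topField : vbracket (timeField (n + 1)) (topField n) = 0 :=
  (vbracket_timeField_verticalField fun t => hasDerivAt_const t _).trans
    (verticalField_eq_zero_iff.2 rfl)

theorem verticalField_jet_eq_ite (s : ℝ → ℝ) :
    verticalField (jet n s) = fun (x : Fin (n + 2) → ℝ) (j : Fin (n + 2)) =>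
      if (j : ℕ) = 0 then 0 else iteratedDeriv ((j : ℕ) - 1) s (x 0) := by
  funext x j
  cases j using Fin.cases <;> simp [verticalField, jet]

theorem suspendedField_companionMap_apply (a : Fin (n + 1) → ℝ) (x : Fin (n + 2) → ℝ)
    (j : Fin (n + 2)) :
    suspendedField (companionMap a) x j =
      if (j : ℕ) = 0 then 1
      else if h : (j : ℕ) ≤ n then x ⟨j + 1, by omega⟩
      else ∑ i, a i * x i.succ := by
  rcases Fin.eq_zero_or_eq_succ j with rfl | ⟨i, rfl⟩
  · simp [suspendedField]
  · cases i using Fin.lastCases with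
    | last => simp [suspendedField, Matrix.vecTail, -Fin.succ_last]
    | cast i =>
      have hi : i.succ.succ = (⟨(i : ℕ) + 1 + 1, by omega⟩ : Fin (n + 2)) := rfl
      simp [suspendedField, Matrix.vecTail, hi]

theorem hasDerivAt_jet {s : ℝ → ℝ} (hs : ContDiff ℝ (n + 1) s) (t : ℝ) :
    HasDerivAt (jet n s) (jet n (deriv s) t) t := by
  refine hasDerivAt_pi.2 fun i => ?_
  have hi : DifferentiableAt ℝ (iteratedDeriv i s) t :=
    hs.differentiable_iteratedDeriv i (by exact_mod_cast i.isLt) t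
  simpa only [jet, ← iteratedDeriv_succ', iteratedDeriv_succ] using hi.hasDerivAt

theorem companionMap_jet_sub_jet_deriv (a : Fin (n + 1) → ℝ) (s : ℝ → ℝ) (t : ℝ) :
    companionMap a (jet n s t) - jet n (deriv s) t =
      Pi.single (Fin.last n) (∑ i, a i * iteratedDeriv i s t - iteratedDeriv (n + 1) s t) := by
  ext j
  cases j using Fin.lastCases <;> simp [jet, iteratedDeriv_succ']

theorem vbracket_jet_suspendedField (a : Fin (n + 1) → ℝ) {s : ℝ → ℝ}
    (hs : ContDiff ℝ (n + 1) s) :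
    vbracket (verticalField (jet n s)) (suspendedField (companionMap a)) =
      verticalField fun t =>
        Pi.single (Fin.last n) (∑ i, a i * iteratedDeriv i s t - iteratedDeriv (n + 1) s t) := by
  rw [vbracket_verticalField_suspendedField _ (hasDerivAt_jet hs)]
  simp_rw [companionMap_jet_sub_jet_deriv]

theorem vbracket_jet_suspendedField_apply (a : Fin (n + 1) → ℝ) {s : ℝ → ℝ}
    (hs : ContDiff ℝ (n + 1) s) (x : Fin (n + 2) → ℝ) :
    vbracket (verticalField (jet n s)) (suspendedField (companionMap a)) x =
      (∑ i, a i * iteratedDeriv i s (x 0) - iteratedDeriv (n + 1) s (x 0)) • topField n x := by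
  rw [vbracket_jet_suspendedField a hs]
  simp [topField, verticalField, ← Pi.single_smul]

theorem vbracket_jet_suspendedField_eq_zero_iff (a : Fin (n + 1) → ℝ) {s : ℝ → ℝ}
    (hs : ContDiff ℝ (n + 1) s) :
    vbracket (verticalField (jet n s)) (suspendedField (companionMap a)) = 0 ↔
      ∀ t, iteratedDeriv (n + 1) s t = ∑ i, a i * iteratedDeriv i s t := by
  rw [vbracket_jet_suspendedField a hs, verticalField_eq_zero_iff, funext_iff]
  exact forall_congr' fun t => Pi.single_eq_zero_iff.trans (sub_eq_zero.trans eq_comm)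

theorem stmt13_general (a : Fin (n + 1) → ℝ)
    (D V : (Fin (n + 2) → ℝ) → (Fin (n + 2) → ℝ))
    (hD : ∀ x j, D x j = if (j : ℕ) = 0 then 1
      else if h : (j : ℕ) ≤ n then x ⟨(j : ℕ) + 1, by omega⟩
      else ∑ i, a i * x i.succ)
    (hV : V = fun _ => Pi.single (Fin.last (n + 1)) 1) :
    (vbracket (fun _ => Pi.single (0 : Fin (n + 2)) 1) D = 0 ∧
     vbracket (fun _ => Pi.single (0 : Fin (n + 2)) 1) V = 0) ∧
    (vbracket (fun x (j : Fin (n + 2)) => if (j : ℕ) = 0 then (0 : ℝ) else x j) D = 0 ∧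
     vbracket (fun x (j : Fin (n + 2)) => if (j : ℕ) = 0 then (0 : ℝ) else x j) V = -V) ∧
    (∀ s : ℝ → ℝ, ContDiff ℝ (n + 1) s →
      ∀ ξ : (Fin (n + 2) → ℝ) → (Fin (n + 2) → ℝ),
        (ξ = fun (x : Fin (n + 2) → ℝ) (j : Fin (n + 2)) =>
          if (j : ℕ) = 0 then (0 : ℝ) else iteratedDeriv ((j : ℕ) - 1) s (x 0)) →
        vbracket ξ V = 0 ∧
        (∀ x, vbracket ξ D x =
          (∑ i, a i * iteratedDeriv i s (x 0) - iteratedDeriv (n + 1) s (x 0)) • V x) ∧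
        (vbracket ξ D = 0 ↔
          ∀ t : ℝ, iteratedDeriv (n + 1) s t = ∑ i, a i * iteratedDeriv i s t)) := by
  obtain rfl : D = suspendedField (companionMap a) :=
    funext₂ fun x j => (hD x j).trans (suspendedField_companionMap_apply a x j).symm
  rw [← topField_eq_single] at hV
  subst hV
  rw [← timeField_eq_single, ← eulerField_eq_ite]
  refine ⟨⟨vbracket_timeField_suspendedField _, vbracket_timeField_topField⟩,
    ⟨vbracket_eulerField_suspendedField _,
      vbracket_eulerField_verticalField (differentiable_const _)⟩, ?_⟩
  rintro s hs ξ rfl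
  rw [← verticalField_jet_eq_ite]
  have hjet : Differentiable ℝ (jet n s) := fun t => (hasDerivAt_jet hs t).differentiableAt
  exact ⟨vbracket_verticalField_verticalField hjet (differentiable_const _),
    vbracket_jet_suspendedField_apply a hs, vbracket_jet_suspendedField_eq_zero_iff a hs⟩

end LinearEquation

/-- On `ℝ^{n+2}` with coordinates `(t, u₀, …, u_n)`, for the total derivative field `D` of
the ODE `u^{(n+1)} = u^{(n+1−r)}` and `V = ∂_{u_n}`:
(i) `∂_t` commutes with `D` and `V`; (ii) the Euler field `ε = Σ u_i ∂_{u_i}` satisfies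
`[ε,D] = 0`, `[ε,V] = −V`; (iii) for smooth `s : ℝ → ℝ`, `ξ_s = Σ s^{(i)}(t) ∂_{u_i}`
satisfies `[ξ_s,V] = 0` and `[ξ_s,D] = (s^{(n+1−r)} − s^{(n+1)})·V`, so `[ξ_s,D] = 0` iff
`s^{(n+1)} = s^{(n+1−r)}`. -/
theorem stmt13 (n r : ℕ) (hn : 2 ≤ n) (hr1 : 2 ≤ r) (hr2 : r ≤ n + 1)
    (D V : (Fin (n + 2) → ℝ) → (Fin (n + 2) → ℝ))
    (hD : ∀ x j, D x j = if (j : ℕ) = 0 then 1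
      else if h : (j : ℕ) ≤ n then x ⟨(j : ℕ) + 1, by omega⟩
      else x ⟨n + 2 - r, by omega⟩)
    (hV : V = fun _ => Pi.single (Fin.last (n + 1)) 1) :
    (vbracket (fun _ => Pi.single (0 : Fin (n + 2)) 1) D = 0 ∧
     vbracket (fun _ => Pi.single (0 : Fin (n + 2)) 1) V = 0) ∧
    (vbracket (fun x (j : Fin (n + 2)) => if (j : ℕ) = 0 then (0 : ℝ) else x j) D = 0 ∧
     vbracket (fun x (j : Fin (n + 2)) => if (j : ℕ) = 0 then (0 : ℝ) else x j) V = -V) ∧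
    (∀ s : ℝ → ℝ, ContDiff ℝ (⊤ : ℕ∞) s →
      ∀ ξ : (Fin (n + 2) → ℝ) → (Fin (n + 2) → ℝ),
        (ξ = fun (x : Fin (n + 2) → ℝ) (j : Fin (n + 2)) =>
          if (j : ℕ) = 0 then (0 : ℝ) else iteratedDeriv ((j : ℕ) - 1) s (x 0)) →
        vbracket ξ V = 0 ∧
        (∀ x, vbracket ξ D x =
          (iteratedDeriv (n + 1 - r) s (x 0) - iteratedDeriv (n + 1) s (x 0)) • V x) ∧
        (vbracket ξ D = 0 ↔
          ∀ t : ℝ, iteratedDeriv (n + 1) s t = iteratedDeriv (n + 1 - r) s t)) := by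
  have hk : n + 2 - r = n + 1 - r + 1 := by omega
  have h := stmt13_general (Pi.single ⟨n + 1 - r, by omega⟩ 1) D V
    (fun x j => by simp [hD, Pi.single_apply, hk]) hV
  refine ⟨h.1, h.2.1, fun s hs => ?_⟩
  simpa [Pi.single_apply] using h.2.2 s (hs.of_le (by exact_mod_cast le_top))
end

section
/- Let 𝔣 be the 9-dimensional real vector space with basis e₀, e₁, …, e₆, x, T. Define a bilinear antisymmetric bracket β₀ on 𝔣 by: β₀(T, x) = −x; β₀(T, e_i) = (i − 4)·e_i for 0 ≤ i ≤ 6; β₀(x, e_i) = e_{i−1} for 1 ≤ i ≤ 6; β₀(x, e₀) = 0; and β₀(e_i, e_j) = 0 for all i, j. (Then β₀ is a Lie bracket on 𝔣.) Suppose β is any Lie algebra bracket on 𝔣 (bilinear, antisymmetric, satisfying the Jacobi identity) such that: β(T, v) = β₀(T, v) and β(x, v) = β₀(x, v) for all v ∈ 𝔣, and for all 0 ≤ i < j ≤ 6, β(e_i, e_j) lies in the subspace of 𝔣 spanned by e_{i+j−4} (when 0 ≤ i+j−4 ≤ 6), by x (when i+j = 7), and by T (when i+j = 8), and β(e_i,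 e_j) = 0 when i+j < 4. Then β(e_i, e_j) = 0 for all i, j; that is, β = β₀. -/
/-!
Put `D = β(x, ·)` and `w = e₆`, so that `e_i = D^(6-i) w`. As `D` is a derivation of `β`, the maps
`β(·, D^k w)` are the iterated commutators of `D` with `β(·, w)`; hence `β` is determined by the
brackets `β(D^k w, w)`, and `β(D^k w, D^k w) = 0` is a linear relation between them. For `k ≤ 4`
these relations leave only two parameters:
`β(e₃, e₆) = p e₅`, `β(e₂, e₆) = 2p e₄`, `β(e₁, e₆) = 2p e₃ + y x`, `β(e₀, e₆) = p e₂`, and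
`β(e₄, e₆) = β(e₅, e₆) = 0`. The Jacobi identity on `(e₀, e₂, e₆)` reads `2p² e₀ = 0`, and then the
one on `(e₂, e₅, e₆)` reads `y e₅ = 0`.
-/

open Finset LinearMap Submodule

theorem mulLeft_sub_mulRight_pow_apply {R A : Type*} [CommRing R] [Ring A] [Algebra R A]
    (a b : A) (k : ℕ) :
    ((mulLeft R a - mulRight R a) ^ k) b =
      ∑ l ∈ range (k + 1), ((-1) ^ l * k.choose l : R) • (a ^ (k - l) * b * a ^ l) := by
  have hcomm : Commute ((-1 : R) • mulRight R a) (mulLeft R a) :=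
    (commute_mulLeft_right a a).symm.smul_left (-1)
  rw [sub_eq_neg_add, ← neg_one_smul R, hcomm.add_pow, LinearMap.sum_apply]
  refine sum_congr rfl fun l _ ↦ ?_
  simp [smul_pow, mul_smul, Nat.cast_smul_eq_nsmul, -nsmul_eq_mul]

theorem pow_apply_eq_sub_of_forall_lt {R V : Type*} [Semiring R] [AddCommMonoid V] [Module R V]
    {D : Module.End R V} {e : ℕ → V} {n k : ℕ}
    (he : ∀ i < n, D (e (i + 1)) = e i) (hk : k ≤ n) : (D ^ k) (e n) = e (n - k) := by
  induction k with
  | zero => simp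
  | succ k ih =>
    rw [pow_succ', Module.End.mul_apply, ih (by lia), ← he (n - (k + 1)) (by lia),
      show n - (k + 1) + 1 = n - k by lia]

/-- `D` is a derivation of the (not necessarily associative) algebra `V` with multiplication `β`.
The Jacobi identity for `β` says that every `β u` is such a derivation. -/
def IsDerivationOf {R V : Type*} [CommRing R] [AddCommGroup V] [Module R V]
    (D : Module.End R V) (β : V →ₗ[R] V →ₗ[R] V) : Prop :=
  ∀ v w, D (β v w) = β (D v) w + β v (D w)

namespace IsDerivationOf

section CommRing

variable {R V : Type*} [CommRing R] [AddCommGroup V] [Module R V]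
  {β : V →ₗ[R] V →ₗ[R] V} {D : Module.End R V}

theorem flip_pow_apply (hD : IsDerivationOf D β) (k : ℕ) (w : V) :
    β.flip ((D ^ k) w) = ((mulLeft R D - mulRight R D) ^ k) (β.flip w) := by
  induction k with
  | zero => rfl
  | succ k ih =>
    rw [pow_succ', pow_succ', Module.End.mul_apply, Module.End.mul_apply, ← ih]
    ext v
    simp [hD v]

theorem apply_pow_eq_sum (hD : IsDerivationOf D β) (k : ℕ) (v w : V) :
    β v ((D ^ k) w) =
      ∑ l ∈ range (k + 1), ((-1) ^ l * k.choose l : R) • (D ^ (k - l)) (β ((D ^ l) v) w) := by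
  have h := LinearMap.congr_fun (hD.flip_pow_apply k w) v
  rw [mulLeft_sub_mulRight_pow_apply] at h
  simpa using h

theorem apply_pow_pow_eq_zero (hD : IsDerivationOf D β) {w : V}
    (hw : ∀ l, β ((D ^ l) w) w = 0) (i j : ℕ) : β ((D ^ i) w) ((D ^ j) w) = 0 := by
  simp_rw [hD.apply_pow_eq_sum, ← Module.End.mul_apply, ← pow_add, Module.End.mul_apply]
  simp [hw]

theorem apply_pow_of_apply_eq_zero (hD : IsDerivationOf D β) {v : V} (hv : D v = 0) (k : ℕ)
    (w : V) : β v ((D ^ k) w) = (D ^ k) (β v w) := by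
  induction k with
  | zero => rfl
  | succ k ih =>
    rw [pow_succ', Module.End.mul_apply, Module.End.mul_apply, ← ih, hD, hv, map_zero,
      LinearMap.zero_apply, zero_add]

theorem sum_pow_apply_eq_zero (hD : IsDerivationOf D β) (hβ : β.IsAlt) (k : ℕ) (w : V) :
    ∑ l ∈ range (k + 1), ((-1) ^ l * k.choose l : R) • (D ^ (k - l)) (β ((D ^ (l + k)) w) w) =
      0 := by
  have h := hD.apply_pow_eq_sum k ((D ^ k) w) w
  rw [hβ] at h
  simpa only [← Module.End.mul_apply, ← pow_add] using h.symm

theorem apply_pow_two_eq (hD : IsDerivationOf D β) (hβ : β.IsAlt) (w : V) :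
    β ((D ^ 2) w) w = D (β (D w) w) := by
  have h : D (β (D w) w) - β ((D ^ 2) w) w = 0 := by
    simpa [sum_range_succ, ← sub_eq_add_neg] using hD.sum_pow_apply_eq_zero hβ 1 w
  exact (sub_eq_zero.mp h).symm

theorem apply_pow_four_eq (hD : IsDerivationOf D β) (hβ : β.IsAlt) {w : V}
    (h₁ : β (D w) w = 0) : β ((D ^ 4) w) w = (2 : R) • D (β ((D ^ 3) w) w) := by
  have h₂ : β ((D ^ 2) w) w = 0 := by rw [hD.apply_pow_two_eq hβ, h₁, map_zero]
  have h : -((2 : R) • D (β ((D ^ 3) w) w)) + β ((D ^ 4) w) w = 0 := by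
    simpa [sum_range_succ, h₂] using hD.sum_pow_apply_eq_zero hβ 2 w
  exact (neg_add_eq_zero.mp h).symm

theorem apply_pow_six_eq (hD : IsDerivationOf D β) (hβ : β.IsAlt) {w : V}
    (h₁ : β (D w) w = 0) :
    β ((D ^ 6) w) w = (3 : R) • D (β ((D ^ 5) w) w) - (5 : R) • (D ^ 3) (β ((D ^ 3) w) w) := by
  have h : (D ^ 3) (β ((D ^ 3) w) w) - (3 : R) • (D ^ 2) (β ((D ^ 4) w) w) +
      (3 : R) • D (β ((D ^ 5) w) w) - β ((D ^ 6) w) w = 0 := by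
    simpa [sum_range_succ, Nat.choose, pow_succ (-1 : R), ← sub_eq_add_neg] using
      hD.sum_pow_apply_eq_zero hβ 3 w
  rw [hD.apply_pow_four_eq hβ h₁, map_smul] at h
  simp only [pow_succ, pow_zero, one_mul, Module.End.mul_apply] at h ⊢
  linear_combination (norm := module) -h

theorem smul_pow_apply_pow_five_eq (hD : IsDerivationOf D β) (hβ : β.IsAlt) {w : V}
    (h₁ : β (D w) w = 0) (h₇ : (D ^ 7) w = 0) :
    (14 : R) • (D ^ 3) (β ((D ^ 5) w) w) = (28 : R) • (D ^ 5) (β ((D ^ 3) w) w) := by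
  have h₈ : (D ^ 8) w = 0 := by rw [pow_succ', Module.End.mul_apply, h₇, map_zero]
  have h : (D ^ 4) (β ((D ^ 4) w) w) - (4 : R) • (D ^ 3) (β ((D ^ 5) w) w) +
      (6 : R) • (D ^ 2) (β ((D ^ 6) w) w) = 0 := by
    simpa [sum_range_succ, Nat.choose, pow_succ (-1 : R), h₇, h₈, ← sub_eq_add_neg] using
      hD.sum_pow_apply_eq_zero hβ 4 w
  rw [hD.apply_pow_four_eq hβ h₁, hD.apply_pow_six_eq hβ h₁] at h
  simp only [map_smul, map_sub, pow_succ, pow_zero, one_mul, Module.End.mul_apply] at h ⊢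
  linear_combination (norm := module) h

end CommRing

section Field

variable {K V : Type*} [Field K] [CharZero K] [AddCommGroup V] [Module K V]
  {β : V →ₗ[K] V →ₗ[K] V}

theorem exists_apply_pow_eq_smul {D : Module.End K V} (hD : IsDerivationOf D β) (hβ : β.IsAlt)
    {x w : V} (hx : D x = 0) (h₆ : (D ^ 6) w ≠ 0) (h₇ : (D ^ 7) w = 0)
    (hβ₁ : β (D w) w = 0) (hβ₃ : β ((D ^ 3) w) w ∈ span K {D w})
    (hβ₅ : β ((D ^ 5) w) w ∈ span K {(D ^ 3) w, x}) :
    ∃ p y : K, β ((D ^ 3) w) w = p • D w ∧ β ((D ^ 4) w) w = (2 * p) • (D ^ 2) w ∧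
      β ((D ^ 5) w) w = (2 * p) • (D ^ 3) w + y • x ∧ β ((D ^ 6) w) w = p • (D ^ 4) w := by
  obtain ⟨p, hp⟩ := mem_span_singleton.mp hβ₃
  obtain ⟨r, y, hry⟩ := mem_span_pair.mp hβ₅
  have hr : r = 2 * p := by
    have h := hD.smul_pow_apply_pow_five_eq hβ hβ₁ h₇
    have hx₃ : (D ^ 3) x = 0 := by rw [pow_succ, Module.End.mul_apply, hx, map_zero]
    rw [← hp, ← hry, map_add, map_smul, map_smul, map_smul, hx₃, smul_zero, add_zero,
      ← Module.End.mul_apply, ← Module.End.mul_apply, ← pow_add, ← pow_succ, smul_smul,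
      smul_smul] at h
    have h' := smul_left_injective K h₆ h
    linear_combination h' / 14
  subst hr
  refine ⟨p, y, hp.symm, ?_, hry.symm, ?_⟩
  · rw [hD.apply_pow_four_eq hβ hβ₁, ← hp, map_smul, smul_smul, pow_two, Module.End.mul_apply]
  · rw [hD.apply_pow_six_eq hβ hβ₁, ← hp, ← hry, map_add, map_smul, map_smul, map_smul, hx,
      ← Module.End.mul_apply, ← Module.End.mul_apply, ← pow_succ, ← pow_succ']
    module

end Field

end IsDerivationOf

section Jacobi

variable {K V : Type*} [Field K] [AddCommGroup V] [Module K V] {β : V →ₗ[K] V →ₗ[K] V}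

theorem eq_zero_of_apply_pow_six_eq_smul [NeZero (2 : K)] (hβ : β.IsAlt)
    (jac : ∀ u, IsDerivationOf (β u) β) {x w : V} {p : K}
    (h₆ : (β x ^ 6) w ≠ 0) (h₇ : (β x ^ 7) w = 0)
    (hβ₄ : β ((β x ^ 4) w) w = (2 * p) • (β x ^ 2) w)
    (hβ₆ : β ((β x ^ 6) w) w = p • (β x ^ 4) w) : p = 0 := by
  have hpow (k : ℕ) : β ((β x ^ 6) w) ((β x ^ k) w) = p • (β x ^ (k + 4)) w := by
    have hx₆ : β x ((β x ^ 6) w) = 0 := by rwa [← Module.End.mul_apply, ← pow_succ']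
    rw [(jac x).apply_pow_of_apply_eq_zero hx₆, hβ₆, map_smul, ← Module.End.mul_apply, ← pow_add]
  have h₈ : (β x ^ 8) w = 0 := by rw [pow_succ', Module.End.mul_apply, h₇, map_zero]
  have h := jac ((β x ^ 6) w) ((β x ^ 4) w) w
  simpa [hβ₄, hβ₆, hpow, h₈, hβ.self_eq_zero, h₆, two_ne_zero] using h

theorem eq_zero_of_apply_pow_five_eq_smul (jac : ∀ u, IsDerivationOf (β u) β)
    {x w : V} {y : K} (hw : β x w ≠ 0) (hβ₁ : β (β x w) w = 0)
    (hβ₄ : β ((β x ^ 4) w) w = 0) (hβ₅ : β ((β x ^ 5) w) w = y • x) : y = 0 := by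
  have h₄₁ : β ((β x ^ 4) w) (β x w) = -y • x := by
    have h := jac x ((β x ^ 4) w) w
    rw [hβ₄, map_zero, ← Module.End.mul_apply, ← pow_succ', hβ₅] at h
    rw [neg_smul, eq_neg_of_add_eq_zero_right h.symm]
  have h := jac ((β x ^ 4) w) (β x w) w
  rw [hβ₁, hβ₄, h₄₁] at h
  simpa [hw] using h

theorem apply_pow_eq_zero [CharZero K] (hβ : β.IsAlt) (jac : ∀ u, IsDerivationOf (β u) β)
    {x w : V} (h₆ : (β x ^ 6) w ≠ 0) (h₇ : (β x ^ 7) w = 0) (hβ₁ : β (β x w) w = 0)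
    (hβ₃ : β ((β x ^ 3) w) w ∈ span K {β x w})
    (hβ₅ : β ((β x ^ 5) w) w ∈ span K {(β x ^ 3) w, x}) (k : ℕ) :
    β ((β x ^ k) w) w = 0 := by
  obtain ⟨p, y, b₃, b₄, b₅, b₆⟩ := (jac x).exists_apply_pow_eq_smul hβ (hβ x) h₆ h₇ hβ₁ hβ₃ hβ₅
  obtain rfl : p = 0 := eq_zero_of_apply_pow_six_eq_smul hβ jac h₆ h₇ b₄ b₆
  simp only [mul_zero, zero_smul, zero_add] at b₃ b₄ b₅ b₆
  have hw : β x w ≠ 0 := fun h ↦ h₆ (by rw [pow_succ, Module.End.mul_apply, h, map_zero])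
  obtain rfl : y = 0 := eq_zero_of_apply_pow_five_eq_smul jac hw hβ₁ b₄ b₅
  rw [zero_smul] at b₅
  match k with
  | 0 => exact hβ w
  | 1 => exact hβ₁
  | 2 => rw [(jac x).apply_pow_two_eq hβ, hβ₁, map_zero]
  | 3 => exact b₃
  | 4 => exact b₄
  | 5 => exact b₅
  | 6 => exact b₆
  | k + 7 => rw [pow_add, Module.End.mul_apply, h₇, map_zero, map_zero, LinearMap.zero_apply]

end Jacobi

theorem stmt15_general {K V : Type*} [Field K] [CharZero K] [AddCommGroup V] [Module K V]
    (β : V →ₗ[K] V →ₗ[K] V) (hβ : β.IsAlt) (jac : ∀ u, IsDerivationOf (β u) β)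
    (e : ℕ → V) (x : V) (he₀ : e 0 ≠ 0) (hxe₀ : β x (e 0) = 0)
    (hxe : ∀ i < 6, β x (e (i + 1)) = e i) (h₅₆ : β (e 5) (e 6) = 0)
    (h₃₆ : β (e 3) (e 6) ∈ span K {e 5}) (h₁₆ : β (e 1) (e 6) ∈ span K {e 3, x}) :
    ∀ i j : ℕ, i ≤ 6 → j ≤ 6 → β (e i) (e j) = 0 := by
  have hpow {k : ℕ} (hk : k ≤ 6) : (β x ^ k) (e 6) = e (6 - k) :=
    pow_apply_eq_sub_of_forall_lt hxe hk
  have he₅ : β x (e 6) = e 5 := hxe 5 (by norm_num)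
  have hrow : ∀ k, β ((β x ^ k) (e 6)) (e 6) = 0 := by
    apply apply_pow_eq_zero hβ jac
    · simpa [hpow] using he₀
    · rw [pow_succ', Module.End.mul_apply, hpow le_rfl, hxe₀]
    · rwa [he₅]
    · rwa [hpow (by norm_num), he₅]
    · rwa [hpow (by norm_num), hpow (by norm_num)]
  intro i j hi hj
  have h := (jac x).apply_pow_pow_eq_zero hrow (6 - i) (6 - j)
  rwa [hpow (Nat.sub_le 6 i), hpow (Nat.sub_le 6 j), Nat.sub_sub_self hi, Nat.sub_sub_self hj] at h

/-- Rigidity of the candidate 9-dimensional algebraic model for 7th order ODEs with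
harmonic curvature in `𝔸₃`: with basis `E 0, …, E 6` (= e₀,…,e₆), `E 7` (= x),
`E 8` (= T) of `𝔣 = ℝ⁹`, any Lie bracket `β` agreeing with the model bracket `β₀` on
`T` and `x`, and whose values `β(e_i, e_j)` lie in the prescribed (strongly regular,
T-invariant) spans, must satisfy `β(e_i, e_j) = 0` for all `i, j`; i.e. `β = β₀`. -/
theorem stmt15
    (E : ℕ → (Fin 9 → ℝ))
    (hE : ∀ (l : ℕ) (h : l < 9), E l = Pi.single (⟨l, h⟩ : Fin 9) 1)
    (β : (Fin 9 → ℝ) →ₗ[ℝ] (Fin 9 → ℝ) →ₗ[ℝ] (Fin 9 → ℝ))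
    (anti : ∀ v w : Fin 9 → ℝ, β v w = -β w v)
    (jac : ∀ u v w : Fin 9 → ℝ, β u (β v w) = β (β u v) w + β v (β u w))
    (hTx : β (E 8) (E 7) = -E 7)
    (hTe : ∀ i : ℕ, i ≤ 6 → β (E 8) (E i) = ((i : ℝ) - 4) • E i)
    (hxe0 : β (E 7) (E 0) = 0)
    (hxe : ∀ i : ℕ, 1 ≤ i → i ≤ 6 → β (E 7) (E i) = E (i - 1))
    (hlow : ∀ i j : ℕ, i ≤ 6 → j ≤ 6 → i < j → i + j < 4 → β (E i) (E j) = 0)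
    (hspan : ∀ i j : ℕ, i ≤ 6 → j ≤ 6 → i < j →
      β (E i) (E j) ∈ Submodule.span ℝ
        ((if 4 ≤ i + j ∧ i + j ≤ 10 then ({E (i + j - 4)} : Set (Fin 9 → ℝ)) else ∅) ∪
         (if i + j = 7 then ({E 7} : Set (Fin 9 → ℝ)) else ∅) ∪
         (if i + j = 8 then ({E 8} : Set (Fin 9 → ℝ)) else ∅))) :
    ∀ i j : ℕ, i ≤ 6 → j ≤ 6 → β (E i) (E j) = 0 := by
  exact stmt15_general β (fun v ↦ self_eq_neg.mp (anti v v)) jac E (E 7) (by simp [hE]) hxe0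
    (fun i hi ↦ hxe (i + 1) (by lia) (by lia)) (by simpa using hspan 5 6)
    (by simpa using hspan 3 6) (by simpa [Set.pair_comm] using hspan 1 6)
end

section
/- Let n ≥ 3 and m ≥ 2 be integers. On ℝ^{1+m} with coordinates (t, u¹, …, u^m), consider the smooth vector fields: ∂_t; ∂_{u^c} for all 1 ≤ c ≤ m; t^i ∂_{u²} for 1 ≤ i ≤ n−1; t^j ∂_{u^a} for all a ≠ 2 and 1 ≤ j ≤ n; u^b ∂_{u^a} for all b ≠ 1 and a ≠ 2; t∂_t − (n−1)u¹∂_{u¹}; 2u¹∂_{u¹} + u²∂_{u²}; and 2tu²∂_{u¹} + ((n+1)t^n/n!)∂_{u²}. These m² + (n−1)m + 4 vector fields are linearly independent over ℝ and their real span is closed under the Lie bracket of vector fields; hence they span a Lie subalgebra of the Lie algebra of smooth vector fields on ℝ^{1+m} of dimension m² + (n+1)m + 3 − (2m − 1) = 𝔐 − 2m + 1, where 𝔐 = m² + (n+1)m + 3. -/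
/-!
The fields have polynomial components, so we work with derivations of the polynomial ring, where
the bracket is the commutator and `[f∂_a, g∂_b] = f(∂_a g)∂_b − g(∂_b f)∂_a`. The two scalings are
the Euler fields with weights `w` satisfying `w_{u¹} = 2w_{u²} − (n−1)w_t`; this is the condition
that makes `2tu²∂_{u¹} + ((n+1)tⁿ/n!)∂_{u²}` homogeneous, and every generator is then an
eigenvector of such a field, so only a few brackets are left to compute. For linear independence,
each generator contains a term `X^e ∂_a` that occurs in no other generator.
-/

namespace PointSymmetry

open MvPolynomial Submodule

section Lie

variable {R A L : Type*} [CommRing R]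

lemma lie_smul_smul [CommRing A] [Algebra R A] (f g : A) (D E : Derivation R A A) :
    ⁅f • D, g • E⁆ = (f * D g) • E - (g * E f) • D + (f * g) • ⁅D, E⁆ := by
  ext h
  simp only [Derivation.commutator_apply, Derivation.smul_apply, Derivation.sub_apply,
    Derivation.add_apply, Derivation.leibniz, smul_eq_mul]
  ring

variable [LieRing L] [LieAlgebra R L] {s : Set L} {x y : L}

lemma lie_mem_span_of_forall_mem (hs : ∀ x ∈ s, ∀ y ∈ s, ⁅x, y⁆ ∈ span R s)
    (hx : x ∈ span R s) (hy : y ∈ span R s) : ⁅x, y⁆ ∈ span R s :=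
  LinearMap.BilinMap.apply_apply_mem_of_mem_span (span R s) s s
    (LieModule.toEnd R L L : L →ₗ[R] L →ₗ[R] L) hs x y hx hy

lemma lie_mem_of_lie_mem_swap {W : Submodule R L} (h : ⁅x, y⁆ ∈ W) : ⁅y, x⁆ ∈ W :=
  lie_skew y x ▸ W.neg_mem h

end Lie

/-- Polynomial vector fields on `R^σ`: the field `∑ₐ fₐ ∂ₐ` is the derivation sending `X a` to
`fₐ`. -/
abbrev PolyField (σ R : Type*) [CommRing R] : Type _ :=
  Derivation R (MvPolynomial σ R) (MvPolynomial σ R)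

section PolynomialFields

variable {R σ : Type*} [CommRing R]

local notation "∂" => pderiv (R := R)
local notation "x_" => X (R := R)

lemma lie_pderiv_pderiv (a b : σ) : ⁅∂ a, ∂ b⁆ = 0 := by
  classical
  ext i : 1
  simp [Derivation.commutator_apply, pderiv_X, Pi.single_apply, apply_ite]

lemma lie_smul_pderiv_smul_pderiv (f g : MvPolynomial σ R) (a b : σ) :
    ⁅f • ∂ a, g • ∂ b⁆ = (f * ∂ a g) • ∂ b - (g * ∂ b f) • ∂ a := by
  rw [lie_smul_smul, lie_pderiv_pderiv, smul_zero, add_zero]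

lemma lie_pderiv_smul_pderiv (g : MvPolynomial σ R) (a b : σ) :
    ⁅∂ a, g • ∂ b⁆ = ∂ a g • ∂ b := by
  simpa using lie_smul_pderiv_smul_pderiv 1 g a b

/-- The diagonal linear vector field `∑ᵢ wᵢ xᵢ ∂ᵢ`, the infinitesimal generator of the scalings
of the coordinates `xᵢ` with weights `wᵢ`. -/
noncomputable def eulerField : (σ → R) →ₗ[R] PolyField σ R :=
  (mkDerivationEquiv R).toLinearMap ∘ₗ LinearMap.pi fun i => (LinearMap.proj i).smulRight (X i)

lemma eulerField_X (w : σ → R) (i : σ) : eulerField w (X i) = w i • X i :=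
  mkDerivation_X ..

lemma eulerField_X_pow (w : σ → R) (i : σ) (k : ℕ) :
    eulerField w (X i ^ k) = (k * w i) • X i ^ k := by
  induction k with
  | zero => simp
  | succ k ih =>
    rw [pow_succ, Derivation.leibniz, ih, eulerField_X]
    simp only [smul_eq_C_mul, smul_eq_mul, Nat.cast_succ, map_mul, map_add, map_one, map_natCast]
    ring

lemma lie_eulerField_eulerField (v w : σ → R) : ⁅eulerField v, eulerField w⁆ = 0 := by
  ext i : 1
  simp [Derivation.commutator_apply, eulerField_X, smul_comm (v i)]

lemma lie_eulerField_smul_pderiv {f : MvPolynomial σ R} {w : σ → R} {r : R}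
    (hf : eulerField w f = r • f) (a : σ) :
    ⁅eulerField w, f • ∂ a⁆ = (r - w a) • f • ∂ a := by
  classical
  ext i : 1
  rcases eq_or_ne i a with rfl | h
  · simp [Derivation.commutator_apply, eulerField_X, hf, sub_smul]
  · simp [Derivation.commutator_apply, eulerField_X, pderiv_X_of_ne h]

section Generators

/-- The vector field `2 x_o x_y ∂_x + c x_o^n ∂_y`, the symmetry that mixes `u¹` and `u²`. -/
noncomputable def mixedField (o x y : σ) (n : ℕ) (c : R) : PolyField σ R :=
  (2 : R) • (x_ o * x_ y) • ∂ x + c • x_ o ^ n • ∂ y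

/-- The symmetries with an arbitrary coefficient `c` in place of `(n+1)/n!`. The coordinates `o`,
`x`, `y` stand for `t`, `u¹`, `u²`; `scaling` covers all combinations of the two scalings, and `pow`
with `k = 0` the translations `∂_{u^a}`. -/
inductive IsGenerator (o x y : σ) (n : ℕ) (c : R) : PolyField σ R → Prop
  | time : IsGenerator o x y n c (∂ o)
  | scaling (w : σ → R) (hx : w x = 2 * w y - (n - 1) * w o)
      (h : ∀ i, i ≠ o → i ≠ x → i ≠ y → w i = 0) : IsGenerator o x y n c (eulerField w)
  | mixed : IsGenerator o x y n c (mixedField o x y n c)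
  | pow (a : σ) (k : ℕ) (ha : a ≠ o) (hk : k ≤ n) (hy : a = y → k < n) :
      IsGenerator o x y n c (x_ o ^ k • ∂ a)
  | lin (b a : σ) (hbo : b ≠ o) (hbx : b ≠ x) (hao : a ≠ o) (hay : a ≠ y) :
      IsGenerator o x y n c (x_ b • ∂ a)

variable {o x y a b d e : σ} {n k l : ℕ} {c : R} {w : σ → R}

lemma lie_pderiv_X_pow_smul_pderiv :
    ⁅∂ o, x_ o ^ k • ∂ a⁆ = (k : R) • x_ o ^ (k - 1) • ∂ a := by
  rw [lie_pderiv_smul_pderiv, pderiv_pow, pderiv_X_self, mul_one, mul_smul, Nat.cast_smul_eq_nsmul,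
    Nat.cast_smul_eq_nsmul]

lemma lie_pderiv_X_smul_pderiv (h : b ≠ o) : ⁅∂ o, x_ b • ∂ a⁆ = 0 := by
  simp [lie_pderiv_smul_pderiv, pderiv_X_of_ne h]

lemma lie_mixedField (D : PolyField σ R) :
    ⁅D, mixedField o x y n c⁆ =
      (2 : R) • ⁅D, (x_ o * x_ y) • ∂ x⁆ + c • ⁅D, x_ o ^ n • ∂ y⁆ := by
  ext f : 1
  simp only [mixedField, Derivation.commutator_apply, Derivation.add_apply, Derivation.smul_apply,
    map_add, Derivation.map_smul, smul_sub]
  abel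

lemma lie_pderiv_mixedField (hy : y ≠ o) :
    ⁅∂ o, mixedField o x y n c⁆ = (2 : R) • x_ y • ∂ x + (c * n) • x_ o ^ (n - 1) • ∂ y := by
  rw [lie_mixedField, lie_pderiv_smul_pderiv, lie_pderiv_X_pow_smul_pderiv, Derivation.leibniz,
    pderiv_X_self, pderiv_X_of_ne hy, smul_zero, zero_add, smul_eq_mul, mul_one, mul_smul]

lemma lie_X_pow_smul_pderiv_X_pow_smul_pderiv (ha : a ≠ o) (hb : b ≠ o) :
    ⁅x_ o ^ k • ∂ a, x_ o ^ l • ∂ b⁆ = 0 := by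
  simp [lie_smul_pderiv_smul_pderiv, pderiv_X_of_ne ha.symm, pderiv_X_of_ne hb.symm]

lemma lie_X_pow_smul_pderiv_X_smul_pderiv [DecidableEq σ] (hd : d ≠ o) :
    ⁅x_ o ^ k • ∂ a, x_ b • ∂ d⁆ = if b = a then x_ o ^ k • ∂ d else 0 := by
  split_ifs with h
  · simp [lie_smul_pderiv_smul_pderiv, pderiv_X_of_ne hd.symm, h]
  · simp [lie_smul_pderiv_smul_pderiv, pderiv_X_of_ne hd.symm, pderiv_X_of_ne h]

lemma lie_X_pow_smul_pderiv_mixedField [DecidableEq σ] (hx : x ≠ o) (hy : y ≠ o) (ha : a ≠ o) :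
    ⁅x_ o ^ k • ∂ a, mixedField o x y n c⁆ =
      if y = a then (2 : R) • x_ o ^ (k + 1) • ∂ x else 0 := by
  rw [lie_mixedField, lie_X_pow_smul_pderiv_X_pow_smul_pderiv ha hy,
    lie_smul_pderiv_smul_pderiv]
  split_ifs with h
  · simp [h, pderiv_X_of_ne hx.symm, pderiv_X_of_ne ha.symm, pow_succ]
  · simp [pderiv_X_of_ne hx.symm, pderiv_X_of_ne ha.symm, pderiv_X_of_ne h]

lemma lie_X_smul_pderiv_X_smul_pderiv [DecidableEq σ] :
    ⁅x_ b • ∂ a, x_ d • ∂ e⁆ =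
      (if d = a then x_ b • ∂ e else 0) - if b = e then x_ d • ∂ a else 0 := by
  simp only [lie_smul_pderiv_smul_pderiv, pderiv_X, Pi.single_apply, mul_ite, mul_one, mul_zero,
    ite_smul, zero_smul, eq_comm]

lemma lie_X_smul_pderiv_mixedField [DecidableEq σ] (hbx : b ≠ x) (hao : a ≠ o) (hay : a ≠ y) :
    ⁅x_ b • ∂ a, mixedField o x y n c⁆ = if b = y then -(c • x_ o ^ n • ∂ a) else 0 := by
  rw [lie_mixedField, ← lie_skew (x_ b • ∂ a) (x_ o ^ n • ∂ y),
    lie_X_pow_smul_pderiv_X_smul_pderiv hao, lie_smul_pderiv_smul_pderiv]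
  split_ifs with h <;>
    simp [pderiv_X_of_ne hbx, pderiv_X_of_ne hao.symm, pderiv_X_of_ne hay.symm]

lemma lie_eulerField_mixedField (hw : w x = 2 * w y - (n - 1) * w o) :
    ⁅eulerField w, mixedField o x y n c⁆ = (n * w o - w y) • mixedField o x y n c := by
  have hxy : eulerField w (X o * X y) = (w o + w y) • (X o * X y) := by
    simp only [Derivation.leibniz, eulerField_X, smul_eq_C_mul, smul_eq_mul, map_add]
    ring
  rw [lie_mixedField, mixedField, lie_eulerField_smul_pderiv hxy,
    lie_eulerField_smul_pderiv (eulerField_X_pow w o n), hw, smul_add, smul_comm (2 : R),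
    smul_comm c]
  congr 2
  ring

/-- The linear span of the generators, which is shown to be closed under the bracket. -/
noncomputable abbrev generatorSpan (o x y : σ) (n : ℕ) (c : R) : Submodule R (PolyField σ R) :=
  span R {D | IsGenerator o x y n c D}

variable {D E : PolyField σ R}

lemma IsGenerator.lie_eulerField_eq_smul (hD : IsGenerator o x y n c D)
    (hw : w x = 2 * w y - (n - 1) * w o) : ∃ r : R, ⁅eulerField w, D⁆ = r • D := by
  rcases hD with - | ⟨v, -, -⟩ | - | ⟨a, k, -, -, -⟩ | ⟨b, a, -, -, -, -⟩
  · exact ⟨-w o, by simpa using lie_eulerField_smul_pderiv (r := 0) (f := 1) (w := w) (by simp) o⟩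
  · exact ⟨0, by rw [lie_eulerField_eulerField, zero_smul]⟩
  · exact ⟨_, lie_eulerField_mixedField hw⟩
  · exact ⟨_, lie_eulerField_smul_pderiv (eulerField_X_pow w o k) a⟩
  · exact ⟨_, lie_eulerField_smul_pderiv (eulerField_X w b) a⟩

lemma IsGenerator.lie_eulerField_mem_span (hD : IsGenerator o x y n c D)
    (hw : w x = 2 * w y - (n - 1) * w o) :
    ⁅eulerField w, D⁆ ∈ generatorSpan o x y n c := by
  obtain ⟨r, hr⟩ := hD.lie_eulerField_eq_smul hw
  exact hr ▸ smul_mem _ r (subset_span hD)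

lemma IsGenerator.lie_pderiv_mem_span (hD : IsGenerator o x y n c D) (hn : 1 ≤ n) (hxo : x ≠ o)
    (hyo : y ≠ o) (hxy : x ≠ y) : ⁅∂ o, D⁆ ∈ generatorSpan o x y n c := by
  rcases hD with - | ⟨w, hw, -⟩ | - | ⟨a, k, ha, hk, hy⟩ | ⟨b, a, hbo, -, -, -⟩
  · rw [lie_self]
    exact zero_mem _
  · exact lie_mem_of_lie_mem_swap (IsGenerator.time.lie_eulerField_mem_span hw)
  · rw [lie_pderiv_mixedField hyo]
    exact add_mem (smul_mem _ _ (subset_span (.lin y x hyo hxy.symm hxo hxy)))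
      (smul_mem _ _ (subset_span (.pow y (n - 1) hyo (n.sub_le 1) fun _ => by omega)))
  · rw [lie_pderiv_X_pow_smul_pderiv]
    exact smul_mem _ _ (subset_span (.pow a (k - 1) ha (by omega) fun _ => by omega))
  · rw [lie_pderiv_X_smul_pderiv hbo]
    exact zero_mem _

lemma IsGenerator.lie_X_pow_smul_pderiv_mem_span (hD : IsGenerator o x y n c D) (hn : 1 ≤ n)
    (hxo : x ≠ o) (hyo : y ≠ o) (hxy : x ≠ y) (ha : a ≠ o) (hk : k ≤ n) (hy : a = y → k < n) :
    ⁅x_ o ^ k • ∂ a, D⁆ ∈ generatorSpan o x y n c := by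
  classical
  have hpow : IsGenerator o x y n c (x_ o ^ k • ∂ a) := .pow a k ha hk hy
  rcases hD with - | ⟨w, hw, -⟩ | - | ⟨b, l, hb, -, -⟩ | ⟨b, d, -, -, hdo, hdy⟩
  · exact lie_mem_of_lie_mem_swap (hpow.lie_pderiv_mem_span hn hxo hyo hxy)
  · exact lie_mem_of_lie_mem_swap (hpow.lie_eulerField_mem_span hw)
  · rw [lie_X_pow_smul_pderiv_mixedField hxo hyo ha]
    split_ifs with hya
    · exact smul_mem _ _ (subset_span (.pow x (k + 1) hxo (hy hya.symm) fun h => (hxy h).elim))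
    · exact zero_mem _
  · rw [lie_X_pow_smul_pderiv_X_pow_smul_pderiv ha hb]
    exact zero_mem _
  · rw [lie_X_pow_smul_pderiv_X_smul_pderiv hdo]
    split_ifs
    · exact subset_span (.pow d k hdo hk fun h => (hdy h).elim)
    · exact zero_mem _

lemma IsGenerator.lie_X_smul_pderiv_mem_span (hD : IsGenerator o x y n c D) (hn : 1 ≤ n)
    (hxo : x ≠ o) (hyo : y ≠ o) (hxy : x ≠ y) (hbo : b ≠ o) (hbx : b ≠ x) (hao : a ≠ o)
    (hay : a ≠ y) : ⁅x_ b • ∂ a, D⁆ ∈ generatorSpan o x y n c := by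
  classical
  have hlin : IsGenerator o x y n c (x_ b • ∂ a) := .lin b a hbo hbx hao hay
  rcases hD with - | ⟨w, hw, -⟩ | - | ⟨d, k, hd, hk, hy⟩ | ⟨d, e, hdo, hdx, heo, hey⟩
  · exact lie_mem_of_lie_mem_swap (hlin.lie_pderiv_mem_span hn hxo hyo hxy)
  · exact lie_mem_of_lie_mem_swap (hlin.lie_eulerField_mem_span hw)
  · rw [lie_X_smul_pderiv_mixedField hbx hao hay]
    split_ifs
    · exact neg_mem (smul_mem _ _ (subset_span (.pow a n hao le_rfl fun h => (hay h).elim)))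
    · exact zero_mem _
  · exact lie_mem_of_lie_mem_swap
      (hlin.lie_X_pow_smul_pderiv_mem_span hn hxo hyo hxy hd hk hy)
  · rw [lie_X_smul_pderiv_X_smul_pderiv]
    refine sub_mem ?_ ?_ <;> split_ifs
    · exact subset_span (.lin b e hbo hbx heo hey)
    · exact zero_mem _
    · exact subset_span (.lin d a hdo hdx hao hay)
    · exact zero_mem _

lemma IsGenerator.lie_mem_span (hn : 1 ≤ n) (hxo : x ≠ o) (hyo : y ≠ o) (hxy : x ≠ y)
    (hD : IsGenerator o x y n c D) (hE : IsGenerator o x y n c E) :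
    ⁅D, E⁆ ∈ generatorSpan o x y n c := by
  have hD' := hD
  rcases hD with - | ⟨w, hw, -⟩ | - | ⟨a, k, ha, hk, hy⟩ | ⟨b, a, hbo, hbx, hao, hay⟩
  · exact hE.lie_pderiv_mem_span hn hxo hyo hxy
  · exact hE.lie_eulerField_mem_span hw
  · rcases hE with - | ⟨w, hw, -⟩ | - | ⟨a, k, ha, hk, hy⟩ | ⟨b, a, hbo, hbx, hao, hay⟩
    · exact lie_mem_of_lie_mem_swap (hD'.lie_pderiv_mem_span hn hxo hyo hxy)
    · exact lie_mem_of_lie_mem_swap (hD'.lie_eulerField_mem_span hw)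
    · rw [lie_self]
      exact zero_mem _
    · exact lie_mem_of_lie_mem_swap
        (hD'.lie_X_pow_smul_pderiv_mem_span hn hxo hyo hxy ha hk hy)
    · exact lie_mem_of_lie_mem_swap
        (hD'.lie_X_smul_pderiv_mem_span hn hxo hyo hxy hbo hbx hao hay)
  · exact hE.lie_X_pow_smul_pderiv_mem_span hn hxo hyo hxy ha hk hy
  · exact hE.lie_X_smul_pderiv_mem_span hn hxo hyo hxy hbo hbx hao hay

end Generators

section LeadingTerms

/-- The vector field `X^e ∂_a`, where `q = (a, e)`. -/
noncomputable def monomialField (q : σ × (σ →₀ ℕ)) : PolyField σ R :=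
  monomial q.2 (1 : R) • ∂ q.1

/-- The coefficient of `X^e ∂_a`, where `q = (a, e)`, in a polynomial vector field. -/
noncomputable def fieldCoeff (q : σ × (σ →₀ ℕ)) : Module.Dual R (PolyField σ R) where
  toFun D := coeff q.2 (D (X q.1))
  map_add' _ _ := by simp
  map_smul' _ _ := by simp

lemma fieldCoeff_monomialField_self (q : σ × (σ →₀ ℕ)) :
    fieldCoeff q (monomialField (R := R) q) = 1 := by
  classical
  simp [fieldCoeff, monomialField, coeff_monomial]

lemma fieldCoeff_monomialField_of_ne {q q' : σ × (σ →₀ ℕ)} (h : q ≠ q') :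
    fieldCoeff q (monomialField (R := R) q') = 0 := by
  classical
  rcases eq_or_ne q.1 q'.1 with h' | h'
  · have he : q'.2 ≠ q.2 := fun he => h (Prod.ext h' he.symm)
    simp [fieldCoeff, monomialField, h', coeff_monomial, he]
  · simp [fieldCoeff, monomialField, h']

lemma monomialField_single (a v : σ) (k : ℕ) :
    monomialField (a, Finsupp.single v k) = x_ v ^ k • ∂ a := by
  rw [monomialField, X_pow_eq_monomial]

lemma eulerField_single [DecidableEq σ] (i : σ) (r : R) :
    eulerField (Pi.single i r) = r • monomialField (i, Finsupp.single i 1) := by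
  rw [monomialField_single]
  ext j : 1
  rcases eq_or_ne j i with rfl | h
  · simp [eulerField_X]
  · simp [eulerField_X, h]

lemma mixedField_eq (o x y : σ) (n : ℕ) (c : R) :
    mixedField o x y n c = c • monomialField (y, Finsupp.single o n) +
      (2 : R) • monomialField (x, Finsupp.single o 1 + Finsupp.single y 1) := by
  rw [mixedField, monomialField_single, monomialField, X, X, monomial_mul, one_mul, add_comm]

lemma single_ne_single_add_single {a b : σ} (hab : a ≠ b) (v : σ) (k : ℕ) :
    Finsupp.single v k ≠ Finsupp.single a 1 + Finsupp.single b 1 := fun h => by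
  have hv {c : σ} (hc : (Finsupp.single a 1 + Finsupp.single b 1 : σ →₀ ℕ) c ≠ 0) : v = c := by
    classical
    by_contra hvc
    rw [← h, Finsupp.single_apply, if_neg hvc] at hc
    exact hc rfl
  exact hab ((hv (by simp)).symm.trans (hv (by simp)))

lemma linearIndependent_of_leadingTerm {ι K : Type*} [Field K]
    {v : ι → PolyField σ K} {lead : ι → σ × (σ →₀ ℕ)}
    (hlead : Function.Injective lead)
    (hv : ∀ i, ∃ r : K, r ≠ 0 ∧ ∃ s : K, ∃ q ∉ Set.range lead,
      v i = r • monomialField (lead i) + s • monomialField q) :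
    LinearIndependent K v := by
  choose r hr s q hq hv using hv
  have hcoeff (i j : ι) :
      fieldCoeff (lead i) (v j) = r j * fieldCoeff (lead i) (monomialField (lead j)) := by
    rw [hv j, map_add, map_smul, map_smul,
      fieldCoeff_monomialField_of_ne fun h => hq j ⟨i, h⟩, smul_zero, add_zero, smul_eq_mul]
  refine .of_pairwise_dual_eq_zero_one v (fun i => (r i)⁻¹ • fieldCoeff (lead i)) ?_ ?_
  · intro i j hij
    simp [hcoeff, fieldCoeff_monomialField_of_ne (hlead.ne hij)]
  · intro i
    simp [hcoeff, fieldCoeff_monomialField_self, hr i]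

end LeadingTerms

end PolynomialFields

section VectorFields

variable {σ : Type*}

/-- The vector field on `ℝ^σ` whose components are the values of a derivation of the polynomial
ring at the coordinates. -/
noncomputable def toVectorField : PolyField σ ℝ →ₗ[ℝ] (σ → ℝ) → (σ → ℝ) where
  toFun D p i := eval p (D (X i))
  map_add' _ _ := by ext; simp
  map_smul' _ _ := by ext; simp

lemma toVectorField_apply (D : PolyField σ ℝ) (p : σ → ℝ) (i : σ) :
    toVectorField D p i = eval p (D (X i)) :=
  rfl

lemma toVectorField_injective : Function.Injective (toVectorField (σ := σ)) := fun _ _ h =>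
  derivation_ext fun i => MvPolynomial.funext fun p => congrFun (congrFun h p) i

lemma toVectorField_smul_pderiv [DecidableEq σ] (f : MvPolynomial σ ℝ) (a : σ) :
    toVectorField (f • pderiv a) = fun p => (Pi.single a (eval p f) : σ → ℝ) := by
  ext p i
  rcases eq_or_ne i a with rfl | h
  · simp [toVectorField_apply]
  · simp [toVectorField_apply, h]

lemma toVectorField_pderiv [DecidableEq σ] (a : σ) :
    toVectorField (pderiv a) = fun _ => (Pi.single a 1 : σ → ℝ) := by
  simpa using toVectorField_smul_pderiv (1 : MvPolynomial σ ℝ) a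

lemma toVectorField_eulerField_single [DecidableEq σ] (i : σ) (r : ℝ) :
    toVectorField (eulerField (Pi.single i r)) = fun p => r • (Pi.single i (p i) : σ → ℝ) := by
  rw [eulerField_single, monomialField_single, pow_one, map_smul, toVectorField_smul_pderiv]
  simp only [eval_X]
  rfl

lemma toVectorField_mixedField [DecidableEq σ] (o x y : σ) (n : ℕ) (c : ℝ) :
    toVectorField (mixedField o x y n c) = fun p : σ → ℝ =>
      (Pi.single x (2 * p o * p y) + Pi.single y (c * p o ^ n) : σ → ℝ) := by
  rw [mixedField, map_add, LinearMap.map_smul, LinearMap.map_smul, toVectorField_smul_pderiv,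
    toVectorField_smul_pderiv]
  ext p i
  simp [← Pi.single_smul, mul_assoc]

lemma differentiable_eval [Finite σ] (f : MvPolynomial σ ℝ) :
    Differentiable ℝ fun p : σ → ℝ => eval p f := by
  have := Fintype.ofFinite σ
  induction f using MvPolynomial.induction_on with
  | C r => simp
  | add f g hf hg => simpa using hf.fun_add hg
  | mul_X f i hf => simpa using hf.fun_mul (differentiable_apply i)

lemma fderiv_eval_toVectorField [Finite σ] (D : PolyField σ ℝ) (f : MvPolynomial σ ℝ)
    (p : σ → ℝ) :
    fderiv ℝ (fun q : σ → ℝ => eval q f) p (toVectorField D p) = eval p (D f) := by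
  have := Fintype.ofFinite σ
  induction f using MvPolynomial.induction_on with
  | C r => simp
  | add f g hf hg =>
    simp [fderiv_fun_add (differentiable_eval f p) (differentiable_eval g p), hf, hg]
  | mul_X f i hf =>
    have hX : fderiv ℝ (fun q : σ → ℝ => q i) p (toVectorField D p) = eval p (D (X i)) := by
      simp [fderiv_apply, toVectorField_apply]
    simp [fderiv_fun_mul (differentiable_eval f p) (differentiableAt_apply i p), hf, hX]

lemma vbracket_toVectorField [Fintype σ] (D E : PolyField σ ℝ) :
    vbracket (toVectorField D) (toVectorField E) = toVectorField ⁅D, E⁆ := by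
  have hfderiv (D E : PolyField σ ℝ) (p : σ → ℝ) (i : σ) :
      fderiv ℝ (toVectorField E) p (toVectorField D p) i = eval p (D (E (X i))) := by
    rw [← fderiv_eval_toVectorField,
      show toVectorField E = fun q j => eval q (E (X j)) from rfl,
      fderiv_pi fun j => differentiable_eval (E (X j)) p]
    rfl
  ext p i
  rw [vbracket, Pi.sub_apply, hfderiv, hfderiv, toVectorField_apply, Derivation.commutator_apply,
    map_sub]

end VectorFields

section IndexedFamily

variable {m : ℕ}

/-- The index type of the symmetries: the four fields `∂_t`, `t∂_t − (n−1)u¹∂_{u¹}`,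
`2u¹∂_{u¹} + u²∂_{u²}`, `2tu²∂_{u¹} + ((n+1)tⁿ/n!)∂_{u²}`, then `∂_{u^c}`, `t^i ∂_{u²}`,
`t^j ∂_{u^a}` and `u^b ∂_{u^a}`. -/
abbrev SymmetryIndex (n m : ℕ) : Type :=
  Fin 4 ⊕ Fin m ⊕ Fin (n - 1) ⊕ (Fin (m - 1) × Fin n) ⊕ (Fin (m - 1) × Fin (m - 1))

lemma card_symmetryIndex {n : ℕ} (hn : 1 ≤ n) (hm : 1 ≤ m) :
    Fintype.card (SymmetryIndex n m) = m ^ 2 + (n + 1) * m + 3 - (2 * m - 1) := by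
  obtain ⟨k, rfl⟩ := Nat.exists_eq_add_of_le' hm
  obtain ⟨l, rfl⟩ := Nat.exists_eq_add_of_le' hn
  simp only [Fintype.card_sum, Fintype.card_prod, Fintype.card_fin, Nat.add_sub_cancel]
  refine (Nat.sub_eq_of_eq_add ?_).symm
  rw [show 2 * (k + 1) - 1 = 2 * k + 1 by omega]
  ring

lemma val_add_two_lt (b : Fin (m - 1)) : (b : ℕ) + 2 < m + 1 := by
  omega

/-- The enumeration of the indices of the coordinates `u^b`, `b ≠ 1`. -/
def sourceIndex (b : Fin (m - 1)) : Fin (m + 1) :=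
  ⟨(b : ℕ) + 2, val_add_two_lt b⟩

lemma one_lt_add_one (hm : 2 ≤ m) : 1 < m + 1 := by
  omega

lemma two_lt_add_one (hm : 2 ≤ m) : 2 < m + 1 := by
  omega

variable (hm : 2 ≤ m)

/-- The index of the coordinate `u¹`. -/
abbrev indexOne : Fin (m + 1) := ⟨1, one_lt_add_one hm⟩

/-- The index of the coordinate `u²`. -/
abbrev indexTwo : Fin (m + 1) := ⟨2, two_lt_add_one hm⟩

/-- The enumeration of the indices of the coordinates `u^a`, `a ≠ 2`. -/
def targetIndex (a : Fin (m - 1)) : Fin (m + 1) :=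
  if (a : ℕ) = 0 then indexOne hm else sourceIndex a

lemma val_targetIndex (a : Fin (m - 1)) :
    (targetIndex hm a : ℕ) = if (a : ℕ) = 0 then 1 else (a : ℕ) + 2 := by
  unfold targetIndex
  split_ifs <;> rfl

lemma range_targetIndex : Set.range (targetIndex hm) = {i | i ≠ 0 ∧ i ≠ indexTwo hm} := by
  ext i
  simp only [Set.mem_range, Set.mem_ofPred_eq, ne_eq, Fin.ext_iff, val_targetIndex, Fin.val_zero]
  refine ⟨?_, fun hi => ⟨⟨i - 2, by omega⟩, ?_⟩⟩
  · rintro ⟨a, ha⟩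
    split_ifs at ha <;> omega
  · dsimp only
    split_ifs <;> omega

lemma range_sourceIndex :
    Set.range (sourceIndex (m := m)) = {i | i ≠ 0 ∧ i ≠ indexOne hm} := by
  ext i
  simp only [Set.mem_range, Set.mem_ofPred_eq, ne_eq, Fin.ext_iff, sourceIndex, Fin.val_zero]
  exact ⟨by omega, fun hi => ⟨⟨i - 2, by omega⟩, by dsimp only; omega⟩⟩

variable (n : ℕ)

/-- The point symmetries of `u^a_{n+1} = (u²_n)² δ^a_1` as polynomial vector fields. -/
noncomputable def symmetry : SymmetryIndex n m → PolyField (Fin (m + 1)) ℝ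
  | .inl 0 => pderiv 0
  | .inl 1 => eulerField (Pi.single 0 1 - ((n : ℝ) - 1) • Pi.single (indexOne hm) 1)
  | .inl 2 => eulerField ((2 : ℝ) • Pi.single (indexOne hm) 1 + Pi.single (indexTwo hm) 1)
  | .inl 3 => mixedField 0 (indexOne hm) (indexTwo hm) n (((n : ℝ) + 1) / n.factorial)
  | .inr (.inl c) => pderiv c.succ
  | .inr (.inr (.inl i)) =>
    (X 0 ^ ((i : ℕ) + 1) : MvPolynomial (Fin (m + 1)) ℝ) • pderiv (indexTwo hm)
  | .inr (.inr (.inr (.inl (a, j)))) =>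
    (X 0 ^ ((j : ℕ) + 1) : MvPolynomial (Fin (m + 1)) ℝ) • pderiv (targetIndex hm a)
  | .inr (.inr (.inr (.inr (b, a)))) =>
    (X (sourceIndex b) : MvPolynomial (Fin (m + 1)) ℝ) • pderiv (targetIndex hm a)

lemma isGenerator_symmetry (hn : 1 ≤ n) (i : SymmetryIndex n m) :
    IsGenerator 0 (indexOne hm) (indexTwo hm) n (((n : ℝ) + 1) / n.factorial)
      (symmetry hm n i) := by
  have htarget (a) : targetIndex hm a ≠ 0 ∧ targetIndex hm a ≠ indexTwo hm :=
    (range_targetIndex hm).subset ⟨a, rfl⟩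
  have hsource (b : Fin (m - 1)) : sourceIndex b ≠ 0 ∧ sourceIndex b ≠ indexOne hm :=
    (range_sourceIndex hm).subset ⟨b, rfl⟩
  rcases i with i | c | i | ⟨a, j⟩ | ⟨b, a⟩
  · fin_cases i
    · exact .time
    · exact .scaling _ (by simp [Fin.ext_iff]) fun i h0 h1 _ => by simp [h0, h1]
    · exact .scaling _ (by simp [Fin.ext_iff]) fun i _ h1 h2 => by simp [h1, h2]
    · exact .mixed
  · simpa [symmetry] using IsGenerator.pow (R := ℝ) c.succ 0 c.succ_ne_zero n.zero_le fun _ => hn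
  · exact .pow _ _ (by simp [Fin.ext_iff]) (by omega) fun _ => by omega
  · exact .pow _ _ (htarget a).1 (by omega) fun h => ((htarget a).2 h).elim
  · exact .lin _ _ (hsource b).1 (hsource b).2 (htarget a).1 (htarget a).2

lemma IsGenerator.mem_span_range_symmetry {D : PolyField (Fin (m + 1)) ℝ}
    (hD : IsGenerator 0 (indexOne hm) (indexTwo hm) n (((n : ℝ) + 1) / n.factorial) D) :
    D ∈ span ℝ (Set.range (symmetry hm n)) := by
  have hmem (i) : symmetry hm n i ∈ span ℝ (Set.range (symmetry hm n)) := subset_span ⟨i, rfl⟩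
  rcases hD with - | ⟨w, hx, hw⟩ | - | ⟨a, k, ha, hk, hy⟩ | ⟨b, a, hbo, hbx, hao, hay⟩
  · exact hmem (.inl 0)
  · have hw' : w = w 0 • (Pi.single 0 1 - ((n : ℝ) - 1) • Pi.single (indexOne hm) 1) +
        w (indexTwo hm) •
          ((2 : ℝ) • Pi.single (indexOne hm) 1 + Pi.single (indexTwo hm) 1) := by
      funext i
      by_cases h0 : i = 0
      · simp [h0, Fin.ext_iff]
      by_cases h1 : i = indexOne hm
      · simp [h1, hx, Fin.ext_iff]
        ring
      by_cases h2 : i = indexTwo hm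
      · simp [h2, Fin.ext_iff]
      · simp [h0, h1, h2, hw]
    rw [hw', map_add, map_smul, map_smul]
    exact add_mem (smul_mem _ _ (hmem (.inl 1))) (smul_mem _ _ (hmem (.inl 2)))
  · exact hmem (.inl 3)
  · rcases k with - | k
    · obtain ⟨c, rfl⟩ := Fin.exists_succ_eq.2 ha
      simpa [symmetry] using hmem (.inr (.inl c))
    · by_cases hay : a = indexTwo hm
      · subst hay
        exact hmem (.inr (.inr (.inl ⟨k, by have := hy rfl; omega⟩)))
      · obtain ⟨a, rfl⟩ := (range_targetIndex hm).superset ⟨ha, hay⟩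
        exact hmem (.inr (.inr (.inr (.inl (a, ⟨k, hk⟩)))))
  · obtain ⟨a, rfl⟩ := (range_targetIndex hm).superset ⟨hao, hay⟩
    obtain ⟨b, rfl⟩ := (range_sourceIndex hm).superset ⟨hbo, hbx⟩
    exact hmem (.inr (.inr (.inr (.inr (b, a)))))

lemma span_range_symmetry (hn : 1 ≤ n) :
    span ℝ (Set.range (symmetry hm n)) =
      generatorSpan 0 (indexOne hm) (indexTwo hm) n (((n : ℝ) + 1) / n.factorial) :=
  le_antisymm (span_mono (Set.range_subset_iff.2 (isGenerator_symmetry hm n hn)))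
    (span_le.2 fun _ hD => hD.mem_span_range_symmetry)

lemma lie_mem_span_range_symmetry (hn : 1 ≤ n) {D E : PolyField (Fin (m + 1)) ℝ}
    (hD : D ∈ span ℝ (Set.range (symmetry hm n))) (hE : E ∈ span ℝ (Set.range (symmetry hm n))) :
    ⁅D, E⁆ ∈ span ℝ (Set.range (symmetry hm n)) := by
  rw [span_range_symmetry hm n hn] at *
  exact lie_mem_span_of_forall_mem (fun _ hD _ hE => hD.lie_mem_span hn (by simp [Fin.ext_iff])
    (by simp [Fin.ext_iff]) (by simp [Fin.ext_iff]) hE) hD hE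

/-- For each symmetry a pair `(a, e)` such that `X^e ∂_a` is a term of it and of no other symmetry.
The exponent of a constant term is written as `single 0 0`, so that all exponents are singles. -/
noncomputable def leadingTerm : SymmetryIndex n m → Fin (m + 1) × (Fin (m + 1) →₀ ℕ)
  | .inl 0 => (0, .single 0 0)
  | .inl 1 => (0, .single 0 1)
  | .inl 2 => (indexTwo hm, .single (indexTwo hm) 1)
  | .inl 3 => (indexTwo hm, .single 0 n)
  | .inr (.inl c) => (c.succ, .single 0 0)
  | .inr (.inr (.inl i)) => (indexTwo hm, .single 0 ((i : ℕ) + 1))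
  | .inr (.inr (.inr (.inl (a, j)))) => (targetIndex hm a, .single 0 ((j : ℕ) + 1))
  | .inr (.inr (.inr (.inr (b, a)))) => (targetIndex hm a, .single (sourceIndex b) 1)

lemma leadingTerm_injective (hn : 1 ≤ n) : Function.Injective (leadingTerm hm n) := by
  rintro (i | c | i | ⟨a, j⟩ | ⟨b, a⟩) (i' | c' | i' | ⟨a', j'⟩ | ⟨b', a'⟩) h <;>
    (try fin_cases i) <;> (try fin_cases i') <;>
    simp [leadingTerm, -Finsupp.single_zero, -Finsupp.single_add, Finsupp.single_eq_single_iff,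
      Fin.ext_iff, val_targetIndex, sourceIndex] at h ⊢ <;> grind

lemma single_indexOne_notMem_range_leadingTerm :
    (indexOne hm, Finsupp.single (indexOne hm) 1) ∉ Set.range (leadingTerm hm n) := by
  rintro ⟨i | c | i | ⟨a, j⟩ | ⟨b, a⟩, h⟩ <;> (try fin_cases i) <;>
    simp [leadingTerm, -Finsupp.single_zero, -Finsupp.single_add, Finsupp.single_eq_single_iff,
      Fin.ext_iff, sourceIndex] at h

lemma single_add_single_notMem_range_leadingTerm :
    (indexOne hm, Finsupp.single 0 1 + Finsupp.single (indexTwo hm) 1) ∉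
      Set.range (leadingTerm hm n) := by
  have hne := single_ne_single_add_single (show 0 ≠ indexTwo hm by simp [Fin.ext_iff])
  rintro ⟨i | c | i | ⟨a, j⟩ | ⟨b, a⟩, h⟩ <;> (try fin_cases i) <;>
    exact hne _ _ (congrArg Prod.snd h)

lemma exists_symmetry_eq (i : SymmetryIndex n m) :
    ∃ r : ℝ, r ≠ 0 ∧ ∃ s : ℝ, ∃ q ∉ Set.range (leadingTerm hm n),
      symmetry hm n i = r • monomialField (leadingTerm hm n i) + s • monomialField q := by
  have hone := single_indexOne_notMem_range_leadingTerm hm n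
  rcases i with i | c | i | ⟨a, j⟩ | ⟨b, a⟩
  · fin_cases i
    · exact ⟨1, one_ne_zero, 0, _, hone, by simp [symmetry, leadingTerm, monomialField]⟩
    · refine ⟨1, one_ne_zero, -((n : ℝ) - 1), _, hone, ?_⟩
      simp only [symmetry, leadingTerm, map_sub, map_smul, eulerField_single]
      module
    · refine ⟨1, one_ne_zero, 2, _, hone, ?_⟩
      simp only [symmetry, leadingTerm, map_add, map_smul, eulerField_single, one_smul, add_comm]
    · exact ⟨((n : ℝ) + 1) / n.factorial, by positivity, 2, _,
        single_add_single_notMem_range_leadingTerm hm n, mixedField_eq ..⟩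
  · exact ⟨1, one_ne_zero, 0, _, hone, by
      simp only [symmetry, leadingTerm, monomialField_single, pow_zero, one_smul, zero_smul,
        add_zero]⟩
  · exact ⟨1, one_ne_zero, 0, _, hone, by
      simp only [symmetry, leadingTerm, monomialField_single, one_smul, zero_smul, add_zero]⟩
  · exact ⟨1, one_ne_zero, 0, _, hone, by
      simp only [symmetry, leadingTerm, monomialField_single, one_smul, zero_smul, add_zero]⟩
  · exact ⟨1, one_ne_zero, 0, _, hone, by
      simp only [symmetry, leadingTerm, monomialField_single, pow_one, one_smul, zero_smul,
        add_zero]⟩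

lemma linearIndependent_symmetry (hn : 1 ≤ n) : LinearIndependent ℝ (symmetry hm n) :=
  linearIndependent_of_leadingTerm (leadingTerm_injective hm n hn) (exists_symmetry_eq hm n)

lemma linearIndependent_toVectorField_symmetry (hn : 1 ≤ n) :
    LinearIndependent ℝ (toVectorField ∘ symmetry hm n) :=
  (linearIndependent_symmetry hm n hn).map' _ (LinearMap.ker_eq_bot.2 toVectorField_injective)

lemma vbracket_mem_span_range_toVectorField_symmetry (hn : 1 ≤ n)
    {X Y : (Fin (m + 1) → ℝ) → Fin (m + 1) → ℝ}
    (hX : X ∈ span ℝ (Set.range (toVectorField ∘ symmetry hm n)))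
    (hY : Y ∈ span ℝ (Set.range (toVectorField ∘ symmetry hm n))) :
    vbracket X Y ∈ span ℝ (Set.range (toVectorField ∘ symmetry hm n)) := by
  rw [Set.range_comp, ← map_span] at *
  obtain ⟨D, hD, rfl⟩ := hX
  obtain ⟨E, hE, rfl⟩ := hY
  rw [vbracket_toVectorField]
  exact mem_map_of_mem (lie_mem_span_range_symmetry hm n hn hD hE)

end IndexedFamily

end PointSymmetry

open PointSymmetry in
theorem stmt16_general (n m : ℕ) (hn : 1 ≤ n) (hm : 2 ≤ m)
    (V : SymmetryIndex n m → (Fin (m + 1) → ℝ) → Fin (m + 1) → ℝ)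
    (h0 : V (Sum.inl 0) = fun _ => Pi.single (0 : Fin (m + 1)) 1)
    (h1 : V (Sum.inl 1) = fun p =>
        (Pi.single (0 : Fin (m + 1)) (p 0) : Fin (m + 1) → ℝ)
        - ((n : ℝ) - 1) •
          (Pi.single (indexOne hm) (p (indexOne hm)) : Fin (m + 1) → ℝ))
    (h2 : V (Sum.inl 2) = fun p =>
        (2 : ℝ) •
          (Pi.single (indexOne hm) (p (indexOne hm)) : Fin (m + 1) → ℝ)
          + (Pi.single (indexTwo hm) (p (indexTwo hm)) : Fin (m + 1) → ℝ))
    (h3 : V (Sum.inl 3) = fun p =>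
        (Pi.single (indexOne hm) (2 * p 0 * p (indexTwo hm)) : Fin (m + 1) → ℝ)
          + (Pi.single (indexTwo hm) (((n : ℝ) + 1) * (p 0) ^ n / (n.factorial : ℝ)) :
              Fin (m + 1) → ℝ))
    (hc : ∀ c : Fin m, V (Sum.inr (Sum.inl c)) = fun _ => Pi.single c.succ 1)
    (hti : ∀ i : Fin (n - 1), V (Sum.inr (Sum.inr (Sum.inl i))) =
        fun p => Pi.single (indexTwo hm) ((p 0) ^ ((i : ℕ) + 1)))
    (htj : ∀ (a : Fin (m - 1)) (j : Fin n),
        V (Sum.inr (Sum.inr (Sum.inr (Sum.inl (a, j))))) =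
        fun p => Pi.single (targetIndex hm a) ((p 0) ^ ((j : ℕ) + 1)))
    (hub : ∀ b a : Fin (m - 1),
        V (Sum.inr (Sum.inr (Sum.inr (Sum.inr (b, a))))) =
        fun p => Pi.single (targetIndex hm a) (p (sourceIndex b))) :
    LinearIndependent ℝ V ∧
    (∀ X ∈ Submodule.span ℝ (Set.range V), ∀ Y ∈ Submodule.span ℝ (Set.range V),
      vbracket X Y ∈ Submodule.span ℝ (Set.range V)) ∧
    Module.finrank ℝ (Submodule.span ℝ (Set.range V))
      = m ^ 2 + (n + 1) * m + 3 - (2 * m - 1) := by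
  have hV : V = toVectorField ∘ symmetry hm n := by
    funext i
    rcases i with i | c | i | ⟨a, j⟩ | ⟨b, a⟩
    · fin_cases i
      · exact h0.trans (toVectorField_pderiv 0).symm
      · refine h1.trans ?_
        simp [symmetry, toVectorField_eulerField_single, funext_iff]
      · refine h2.trans ?_
        simp [symmetry, toVectorField_eulerField_single, funext_iff]
      · refine h3.trans ?_
        simp [symmetry, toVectorField_mixedField, div_mul_eq_mul_div]
    · exact (hc c).trans (toVectorField_pderiv c.succ).symm
    · rw [hti]
      simp [symmetry, toVectorField_smul_pderiv]
    · rw [htj]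
      simp [symmetry, toVectorField_smul_pderiv]
    · rw [hub]
      simp [symmetry, toVectorField_smul_pderiv]
  have hind := linearIndependent_toVectorField_symmetry hm n hn
  subst hV
  refine ⟨hind, fun X hX Y hY =>
    vbracket_mem_span_range_toVectorField_symmetry hm n hn hX hY, ?_⟩
  rw [finrank_span_eq_card hind, card_symmetryIndex hn (by omega)]

/-- The point symmetries of the vector ODE `u^a_{n+1} = (u²_n)² δ^a_1` on
`ℝ^{1+m}` with coordinates `(t, u¹, …, u^m) = (p 0, p 1, …, p m)`:
`∂_t`; `∂_{u^c}` (all `c`); `t^i ∂_{u²}` (`1 ≤ i ≤ n−1`); `t^j ∂_{u^a}`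
(`a ≠ 2`, `1 ≤ j ≤ n`); `u^b ∂_{u^a}` (`b ≠ 1`, `a ≠ 2`);
`t∂_t − (n−1)u¹∂_{u¹}`; `2u¹∂_{u¹} + u²∂_{u²}`; `2tu²∂_{u¹} + ((n+1)tⁿ/n!)∂_{u²}`
are linearly independent and span a Lie algebra of vector fields of dimension
`m² + (n+1)m + 3 − (2m − 1)`. Indices `a ≠ 2` are parametrized by `Fin (m−1)`
(`0 ↦ u¹`, `l ↦ u^{l+2}` for `l ≥ 1`), indices `b ≠ 1` by `Fin (m−1)` (`b ↦ u^{b+2}`). -/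
theorem stmt16 (n m : ℕ) (hn : 3 ≤ n) (hm : 2 ≤ m)
    (V : (Fin 4 ⊕ Fin m ⊕ Fin (n - 1) ⊕ (Fin (m - 1) × Fin n) ⊕ (Fin (m - 1) × Fin (m - 1))) →
      ((Fin (m + 1) → ℝ) → (Fin (m + 1) → ℝ)))
    (h0 : V (Sum.inl 0) = fun _ => Pi.single (0 : Fin (m + 1)) 1)
    (h1 : V (Sum.inl 1) = fun p =>
        (Pi.single (0 : Fin (m + 1)) (p 0) : Fin (m + 1) → ℝ)
        - ((n : ℝ) - 1) •
          (Pi.single (⟨1, by omega⟩ : Fin (m + 1)) (p ⟨1, by omega⟩) : Fin (m + 1) → ℝ))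
    (h2 : V (Sum.inl 2) = fun p =>
        (2 : ℝ) •
          (Pi.single (⟨1, by omega⟩ : Fin (m + 1)) (p ⟨1, by omega⟩) : Fin (m + 1) → ℝ)
          + (Pi.single (⟨2, by omega⟩ : Fin (m + 1)) (p ⟨2, by omega⟩) : Fin (m + 1) → ℝ))
    (h3 : V (Sum.inl 3) = fun p =>
        (Pi.single (⟨1, by omega⟩ : Fin (m + 1)) (2 * p 0 * p ⟨2, by omega⟩)
            : Fin (m + 1) → ℝ)
          + (Pi.single (⟨2, by omega⟩ : Fin (m + 1))
              (((n : ℝ) + 1) * (p 0) ^ n / (n.factorial : ℝ)) : Fin (m + 1) → ℝ))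
    (hc : ∀ c : Fin m, V (Sum.inr (Sum.inl c)) = fun _ => Pi.single c.succ 1)
    (hti : ∀ i : Fin (n - 1), V (Sum.inr (Sum.inr (Sum.inl i))) =
        fun p => Pi.single (⟨2, by omega⟩ : Fin (m + 1)) ((p 0) ^ ((i : ℕ) + 1)))
    (htj : ∀ (a : Fin (m - 1)) (j : Fin n),
        V (Sum.inr (Sum.inr (Sum.inr (Sum.inl (a, j))))) =
        fun p => Pi.single
          (if (a : ℕ) = 0 then (⟨1, by omega⟩ : Fin (m + 1))
            else ⟨(a : ℕ) + 2, by have := a.isLt; omega⟩)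
          ((p 0) ^ ((j : ℕ) + 1)))
    (hub : ∀ b a : Fin (m - 1),
        V (Sum.inr (Sum.inr (Sum.inr (Sum.inr (b, a))))) =
        fun p => Pi.single
          (if (a : ℕ) = 0 then (⟨1, by omega⟩ : Fin (m + 1))
            else ⟨(a : ℕ) + 2, by have := a.isLt; omega⟩)
          (p ⟨(b : ℕ) + 2, by have := b.isLt; omega⟩)) :
    LinearIndependent ℝ V ∧
    (∀ X ∈ Submodule.span ℝ (Set.range V), ∀ Y ∈ Submodule.span ℝ (Set.range V),
      vbracket X Y ∈ Submodule.span ℝ (Set.range V)) ∧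
    Module.finrank ℝ (Submodule.span ℝ (Set.range V))
      = m ^ 2 + (n + 1) * m + 3 - (2 * m - 1) := by
  exact stmt16_general n m (by omega) hm V h0 h1 h2 h3 hc hti htj hub
end
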